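/- arXiv:1802.03437 — 3 statements merged into one kernel-verified Lean document; each statement's English description precedes it below -/
import Mathlib

section
/- Let Q be a primitive positive-definite quaternary integer-valued quadratic form with Gram matrix A, let p be an odd prime, and let n be a positive integer. If there exists x ∈ ℤ⁴ with Q(x) ≡ n (mod p) and Ax ≢ 0 (mod p), then the local density β_p(Q;n) exists and satisfies β_p(Q;n) ≥ 1 − 1/p. -/
open scoped BigOperators

/-- Value of the quadratic form with Gram matrix `A` (symmetric, even diagonal)
over any commutative ring: `Q(x) = ∑ (aᵢᵢ/2) xᵢ² + ∑_{i<j} aᵢⱼ xᵢ xⱼ`. -/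
def Qval {R : Type*} [CommRing R] (A : Matrix (Fin 4) (Fin 4) ℤ) (x : Fin 4 → R) : R :=
  (∑ i, ((A i i / 2 : ℤ) : R) * x i ^ 2) +
    ∑ i, ∑ j ∈ Finset.Ioi i, ((A i j : ℤ) : R) * (x i * x j)

/-- `A` is the Gram matrix of an integer-valued quadratic form. -/
def IsGram (A : Matrix (Fin 4) (Fin 4) ℤ) : Prop :=
  A.IsSymm ∧ ∀ i, 2 ∣ A i i

/-- The form is primitive: the gcd of its coefficients is 1. -/
def IsPrimitiveQF (A : Matrix (Fin 4) (Fin 4) ℤ) : Prop :=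
  ∀ d : ℤ, (∀ i, d ∣ A i i / 2) → (∀ i j, i ≠ j → d ∣ A i j) → IsUnit d

/-- The form is positive definite. -/
def PosDefQF (A : Matrix (Fin 4) (Fin 4) ℤ) : Prop :=
  (A.map (Int.cast : ℤ → ℝ)).PosDef

/-- `N` is the level of the form with Gram matrix `A`: the smallest positive integer
such that `N • A⁻¹` has integer entries and even diagonal. -/
def IsLevel (A : Matrix (Fin 4) (Fin 4) ℤ) (N : ℕ) : Prop :=
  0 < N ∧
    (∃ B : Matrix (Fin 4) (Fin 4) ℤ,
      B.map (Int.cast : ℤ → ℚ) = (N : ℚ) • (A.map (Int.cast : ℤ → ℚ))⁻¹ ∧ ∀ i, 2 ∣ B i i) ∧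
    ∀ M : ℕ, 0 < M →
      (∃ B : Matrix (Fin 4) (Fin 4) ℤ,
        B.map (Int.cast : ℤ → ℚ) = (M : ℚ) • (A.map (Int.cast : ℤ → ℚ))⁻¹ ∧ ∀ i, 2 ∣ B i i) →
      N ≤ M

/-- `n` is represented by the form over `ℤ`. -/
def Represented (A : Matrix (Fin 4) (Fin 4) ℤ) (n : ℕ) : Prop :=
  ∃ x : Fin 4 → ℤ, Qval A x = (n : ℤ)

/-- `n` is locally represented: representable over `ℤ_p` for every prime `p`. -/
def LocallyRepresented (A : Matrix (Fin 4) (Fin 4) ℤ) (n : ℕ) : Prop :=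
  ∀ (p : ℕ) [Fact p.Prime], ∃ x : Fin 4 → ℤ_[p], Qval A x = (n : ℤ_[p])

/-- Number of solutions of `Q(x) ≡ n mod p^k`. -/
noncomputable def localCount (A : Matrix (Fin 4) (Fin 4) ℤ) (p n k : ℕ) : ℕ :=
  Nat.card {x : Fin 4 → ZMod (p ^ k) // Qval A x = (n : ZMod (p ^ k))}

/-- The local density `β_p(Q;n)` exists and is at least `c`. -/
def DensityBound (A : Matrix (Fin 4) (Fin 4) ℤ) (p n : ℕ) (c : ℝ) : Prop :=
  ∃ β : ℝ,
    Filter.Tendsto (fun k => (localCount A p n k : ℝ) / (p : ℝ) ^ (3 * k))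
      Filter.atTop (nhds β) ∧ c ≤ β



/-!
Put `q = p ^ k`, let `B` be the polar form of `Q`, and call `#{x : Q x ≡ n (mod q)} * q / q ^ d`
the density modulo `q`, where `d` is the rank.

If `q ∤ n`, every residue modulo `p * q` lying over `n mod q` is a unit square times `n`, because
`p` is odd. Scaling by units shows that these residues are represented equally often, so the
densities modulo `q` and modulo `p * q` agree, and the limit is attained at every such `q`.

If some `v` is isotropic modulo `p` but not in the radical, then for each of the
`φ(q) * q ^ (d - 1)` vectors `x` with `B(v, x)` a unit, `Q (x + t v) = n` for exactly one `t`.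
Each solution arises from at most `q` pairs `(x, t)`, so the density modulo `q` is at least
`φ(q) / q = 1 - 1 / p`.

Otherwise every isotropic vector modulo `p` is in the radical, so `p ∤ n` and the density is
already attained modulo `p`. Hence the reflections of the given solution `x` in the `p ^ (d - 1)`
vectors `y` with `B(x, y) = 1` are defined; they are distinct solutions, and the density is at
least `1`.
-/

open QuadraticMap Function Filter Topology Matrix

theorem card_subtype_comp_eq_mul {α β F : Type*} (f : α → β) (q : β → Prop)
    (h : ∀ y, q y → Nonempty ({x // f x = y} ≃ F)) :
    Nat.card {x // q (f x)} = Nat.card {y // q y} * Nat.card F := by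
  rw [← Nat.card_prod]
  exact Nat.card_congr <| (Equiv.sigmaSubtypeFiberEquivSubtype f fun _ => Iff.rfl).symm.trans <|
    (Equiv.sigmaCongrRight fun y : {y // q y} => (h y y.2).some).trans (Equiv.sigmaEquivProd _ _)

theorem card_preimage_mul_card {G H : Type*} [AddGroup G] [AddGroup H] (f : G →+ H)
    (hf : Surjective f) (q : H → Prop) :
    Nat.card {x // q (f x)} * Nat.card H = Nat.card G * Nat.card {y // q y} := by
  have card_preimage (q : H → Prop) :
      Nat.card {x // q (f x)} = Nat.card {y // q y} * Nat.card f.ker :=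
    card_subtype_comp_eq_mul f q fun y _ => ⟨f.fiberEquivKerOfSurjective hf y⟩
  have card_domain : Nat.card G = Nat.card H * Nat.card f.ker := by
    simpa using card_preimage fun _ => True
  rw [card_preimage, card_domain]
  ring

theorem linearMap_surjective_of_isUnit_apply {R M : Type*} [Semiring R] [AddCommMonoid M]
    [Module R M] (f : M →ₗ[R] R) {w : M} (hw : IsUnit (f w)) : Surjective f := by
  obtain ⟨u, hu⟩ := hw.exists_left_inv
  exact fun r => ⟨(r * u) • w, by rw [map_smul, smul_eq_mul, mul_assoc, hu, mul_one]⟩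

theorem exists_unit_sq_mul_eq_one_add_mul {R : Type*} [CommRing R] (h2 : IsUnit (2 : R))
    {a c : R} (ha : IsNilpotent a) (hac : a ^ 2 * c = 0) :
    ∃ s : Rˣ, (s : R) ^ 2 * c = (1 + a) * c := by
  obtain ⟨b, hb⟩ := h2.exists_right_inv
  obtain ⟨s, hs⟩ := ((Commute.all b a).isNilpotent_mul_left ha).isUnit_one_add
  refine ⟨s, ?_⟩
  rw [hs]
  linear_combination a * c * hb + b ^ 2 * hac

theorem exists_unit_sq_mul_eq_add_pow_mul {R : Type*} [CommRing R] (h2 : IsUnit (2 : R))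
    {π u : R} (hu : IsUnit u) {m k : ℕ} (hmk : m < k) (hπ : π ^ (k + 1) = 0) (b : R) :
    ∃ s : Rˣ, (s : R) ^ 2 * (π ^ m * u) = π ^ m * u + π ^ k * b := by
  obtain ⟨v, hv⟩ := hu.exists_right_inv
  obtain ⟨d, rfl⟩ := Nat.exists_eq_add_of_lt hmk
  have nilpotent : IsNilpotent (π ^ (d + 1) * (v * b)) :=
    (Commute.all _ _).isNilpotent_mul_right (IsNilpotent.pow_of_pos ⟨_, hπ⟩ d.succ_ne_zero)
  obtain ⟨s, hs⟩ := exists_unit_sq_mul_eq_one_add_mul h2 (c := π ^ m * u) nilpotent (by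
    linear_combination π ^ d * v ^ 2 * b ^ 2 * u * hπ)
  refine ⟨s, hs.trans ?_⟩
  linear_combination π ^ (m + d + 1) * b * hv

section SolutionDensity

variable {R M S N : Type*} [CommRing R] [AddCommGroup M] [Module R M]
  [CommRing S] [AddCommGroup N] [Module S N]

/-- The number of solutions of `Q x = c` in `M`, relative to its expected size `#M / #R`.
For `R = ℤ/p^k` and `M = R^d` this is the quotient `#{x : Q x = c} / p ^ ((d - 1) * k)` whose
limit is the local density; it is meaningful only for finite `R` and `M`. -/
noncomputable def solutionDensity (Q : QuadraticForm R M) (c : R) : ℝ :=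
  Nat.card {x // Q x = c} * Nat.card R / Nat.card M

theorem nonempty_solutions_unit_sq_mul_equiv (Q : QuadraticForm R M) (s : Rˣ) (c : R) :
    Nonempty ({x // Q x = (s : R) ^ 2 * c} ≃ {x // Q x = c}) := by
  refine ⟨((MulAction.toPerm s).subtypeEquiv fun x => ?_).symm⟩
  rw [MulAction.toPerm_apply, Units.smul_def, QuadraticMap.map_smul, smul_eq_mul, ← pow_two,
    (s.isUnit.pow 2).mul_right_inj]

theorem card_solutions_over_residue (Q : QuadraticForm R M) (f : R →+* S) {c : R}
    (hsq : ∀ r, f r = f c → ∃ s : Rˣ, r = (s : R) ^ 2 * c) :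
    Nat.card {x // f (Q x) = f c} = Nat.card {r // f r = f c} * Nat.card {x // Q x = c} := by
  refine card_subtype_comp_eq_mul Q (fun r => f r = f c) fun r hr => ?_
  obtain ⟨s, rfl⟩ := hsq r hr
  exact nonempty_solutions_unit_sq_mul_equiv Q s c

theorem solutionDensity_eq_of_surjective [Finite R] [Finite M]
    (Q : QuadraticForm R M) (Q' : QuadraticForm S N)
    (f : R →+* S) (hf : Surjective f) (g : M →+ N) (hg : Surjective g)
    (hfg : ∀ x, f (Q x) = Q' (g x)) {c : R}
    (hsq : ∀ r, f r = f c → ∃ s : Rˣ, r = (s : R) ^ 2 * c) :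
    solutionDensity Q c = solutionDensity Q' (f c) := by
  have : Finite S := .of_surjective f hf
  have : Finite N := .of_surjective g hg
  have residues : Nat.card {r // f r = f c} * Nat.card S = Nat.card R := by
    simpa using card_preimage_mul_card f.toAddMonoidHom hf (· = f c)
  have solutions :
      Nat.card {x // f (Q x) = f c} * Nat.card N = Nat.card M * Nat.card {y // Q' y = f c} := by
    simp only [hfg]
    exact card_preimage_mul_card g hg fun y => Q' y = f c
  rw [card_solutions_over_residue Q f hsq] at solutions
  rw [solutionDensity, solutionDensity,
    div_eq_div_iff (by simp [Nat.card_pos.ne']) (by simp [Nat.card_pos.ne']), ← residues]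
  norm_cast
  linear_combination Nat.card S * solutions

theorem quadraticForm_apply_add_smul (Q : QuadraticForm R M) (x v : M) (t : R) :
    Q (x + t • v) = Q x + t * polar Q x v + t ^ 2 * Q v := by
  rw [QuadraticMap.map_add Q, QuadraticMap.map_smul, polar_smul_right]
  simp only [smul_eq_mul]
  ring

theorem exists_apply_add_smul_eq [Finite R] (Q : QuadraticForm R M) {v x : M}
    (hv : IsNilpotent (Q v)) (hvx : IsUnit (polar Q v x)) (c : R) :
    ∃ t : R, Q (x + t • v) = c := by
  refine Finite.surjective_of_injective (f := fun t : R => Q (x + t • v)) (fun t s hts => ?_) c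
  simp only [quadraticForm_apply_add_smul, polar_comm Q x v] at hts
  have unit_slope : IsUnit (polar Q v x + (t + s) * Q v) :=
    ((Commute.all _ _).isNilpotent_mul_left hv).isUnit_add_left_of_commute hvx (Commute.all _ _)
  refine sub_eq_zero.1 (unit_slope.mul_left_eq_zero.1 ?_)
  linear_combination hts

theorem card_isUnit_polar_le_card_solutions_mul_card [Finite R] [Finite M]
    (Q : QuadraticForm R M) {v : M} (hv : IsNilpotent (Q v)) (c : R) :
    Nat.card {x // IsUnit (polar Q v x)} ≤ Nat.card {x // Q x = c} * Nat.card R := by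
  choose t ht using fun x : {x // IsUnit (polar Q v x)} => exists_apply_add_smul_eq Q hv x.2 c
  rw [← Nat.card_prod]
  refine Nat.card_le_card_of_injective (fun x => (⟨x + t x • v, ht x⟩, t x)) fun x y hxy => ?_
  obtain ⟨same_point, same_time⟩ : (x + t x • v : M) = y + t y • v ∧ t x = t y := by
    simpa using hxy
  rw [same_time] at same_point
  exact Subtype.ext (add_right_cancel same_point)

theorem card_units_div_card_le_solutionDensity [Finite R] [Finite M]
    (Q : QuadraticForm R M) {v w : M} (hv : IsNilpotent (Q v)) (hvw : IsUnit (polar Q v w))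
    (c : R) : (Nat.card Rˣ / Nat.card R : ℝ) ≤ solutionDensity Q c := by
  have card_isUnit : Nat.card {r : R // IsUnit r} = Nat.card Rˣ :=
    Nat.card_range_of_injective Units.val_injective
  have card_polar := card_preimage_mul_card (Q.polarBilin v).toAddMonoidHom
    (linearMap_surjective_of_isUnit_apply (Q.polarBilin v) hvw) IsUnit
  have bound := Nat.mul_le_mul_right (Nat.card R)
    (card_isUnit_polar_le_card_solutions_mul_card Q hv c)
  rw [solutionDensity, div_le_div_iff₀ (by simp) (by simp)]
  norm_cast
  rw [mul_comm, ← card_isUnit, ← card_polar]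
  exact bound

theorem card_polar_eq_one_le_card_solutions [Finite M] (Q : QuadraticForm R M) {x : M}
    (hx : ∀ y, polar Q x y = 1 → IsUnit (Q y)) :
    Nat.card {y // polar Q x y = 1} ≤ Nat.card {z // Q z = Q x} := by
  choose r hr using fun y : {y // polar Q x y = 1} => (hx y y.2).exists_left_inv
  have apply_reflection (y : {y // polar Q x y = 1}) : Q (x + -r y • (y : M)) = Q x := by
    rw [quadraticForm_apply_add_smul, y.2]
    linear_combination r y * hr y
  refine Nat.card_le_card_of_injective (fun y => ⟨x + -r y • (y : M), apply_reflection y⟩)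
    fun y z hyz => ?_
  have same_multiple : -r y • (y : M) = -r z • (z : M) :=
    add_left_cancel (congrArg Subtype.val hyz)
  have same_scalar : -r y = -r z := by
    simpa only [polar_smul_right, y.2, z.2, smul_eq_mul, mul_one] using
      congrArg (polar Q x) same_multiple
  have unit_scalar : IsUnit (-r z) := (IsUnit.of_mul_eq_one _ (hr z)).neg
  rw [same_scalar] at same_multiple
  exact Subtype.ext (unit_scalar.smul_left_cancel.1 same_multiple)

theorem one_le_solutionDensity_of_isUnit_of_polar_eq_one [Finite R] [Finite M]
    (Q : QuadraticForm R M) {x w : M} (hxw : IsUnit (polar Q x w))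
    (hx : ∀ y, polar Q x y = 1 → IsUnit (Q y)) : 1 ≤ solutionDensity Q (Q x) := by
  have card_polar : Nat.card {y // polar Q x y = 1} * Nat.card R = Nat.card M := by
    simpa using card_preimage_mul_card (Q.polarBilin x).toAddMonoidHom
      (linearMap_surjective_of_isUnit_apply (Q.polarBilin x) hxw) (· = 1)
  rw [solutionDensity, one_le_div (by simp [Nat.card_pos]), ← card_polar]
  exact_mod_cast Nat.mul_le_mul_right _ (card_polar_eq_one_le_card_solutions Q hx)

end SolutionDensity

section CoeffForm

variable {ι : Type*} [Fintype ι] [DecidableEq ι]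

/-- The quadratic form `∑ i, ∑ j, C i j * x i * x j` over `R`. Starting from integral
coefficients, rather than from a form over `ℤ`, allows changing the ring without inverting `2`,
which `QuadraticForm.baseChange` requires. -/
def coeffForm (C : Matrix ι ι ℤ) (R : Type*) [CommRing R] : QuadraticForm R (ι → R) :=
  (C.map (Int.cast : ℤ → R)).toQuadraticForm'

theorem coeffForm_apply (C : Matrix ι ι ℤ) {R : Type*} [CommRing R] (x : ι → R) :
    coeffForm C R x = x ⬝ᵥ C.map (Int.cast : ℤ → R) *ᵥ x :=
  Matrix.toLinearMap₂'_apply' ..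

theorem map_coeffForm (C : Matrix ι ι ℤ) {R S : Type*} [CommRing R] [CommRing S] (f : R →+* S)
    (x : ι → R) : f (coeffForm C R x) = coeffForm C S (f ∘ x) := by
  simp [coeffForm_apply, dotProduct, mulVec]

theorem map_polar_coeffForm (C : Matrix ι ι ℤ) {R S : Type*} [CommRing R] [CommRing S]
    (f : R →+* S) (x y : ι → R) :
    f (polar (coeffForm C R) x y) = polar (coeffForm C S) (f ∘ x) (f ∘ y) := by
  have comp_add : f ∘ (x + y) = f ∘ x + f ∘ y := funext fun i => map_add f (x i) (y i)
  simp only [polar, map_sub, map_coeffForm, comp_add]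

theorem polar_coeffForm (C : Matrix ι ι ℤ) (x y : ι → ℤ) :
    polar (coeffForm C ℤ) x y = y ⬝ᵥ (C + Cᵀ) *ᵥ x := by
  have map_cast : C.map (Int.cast : ℤ → ℤ) = C := by ext; simp
  rw [coeffForm, map_cast, Matrix.toQuadraticForm', LinearMap.BilinMap.polar_toQuadraticMap,
    Matrix.toLinearMap₂'_apply', Matrix.toLinearMap₂'_apply', Matrix.add_mulVec, dotProduct_add,
    Matrix.mulVec_transpose, dotProduct_comm y (x ᵥ* C), ← dotProduct_mulVec, add_comm]

end CoeffForm

section PrimePower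

theorem isNilpotent_intCast_zmod_pow {p k : ℕ} {a : ℤ} (ha : (p : ℤ) ∣ a) :
    IsNilpotent (a : ZMod (p ^ k)) := by
  refine ⟨k, ?_⟩
  rw [← Int.cast_pow, ZMod.intCast_zmod_eq_zero_iff_dvd, Nat.cast_pow]
  exact pow_dvd_pow_of_dvd ha k

variable {p : ℕ} [Fact p.Prime] {k : ℕ}

theorem isUnit_intCast_zmod_prime_pow (hk : k ≠ 0) (a : ℤ) :
    IsUnit (a : ZMod (p ^ k)) ↔ ¬ (p : ℤ) ∣ a := by
  rw [ZMod.coe_int_isUnit_iff_isCoprime, Nat.cast_pow, IsCoprime.pow_left_iff (by lia),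
    (Nat.prime_iff_prime_int.1 Fact.out).coprime_iff_not_dvd]

theorem card_units_div_card_zmod_prime_pow (hk : k ≠ 0) :
    (Nat.card (ZMod (p ^ k))ˣ / Nat.card (ZMod (p ^ k)) : ℝ) = 1 - 1 / p := by
  have hp : p.Prime := Fact.out
  rw [Nat.card_eq_fintype_card, ZMod.card_units_eq_totient, Nat.card_zmod,
    Nat.totient_prime_pow hp (by lia), ← mul_pow_sub_one hk]
  have : (p : ℝ) ≠ 0 := mod_cast hp.ne_zero
  push_cast [hp.one_le]
  field_simp

theorem eq_unit_sq_mul_of_castHom_eq (hodd : p ≠ 2) {n : ℤ} (hn : ¬ (p : ℤ) ^ k ∣ n)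
    {r : ZMod (p ^ (k + 1))}
    (hr : ZMod.castHom (pow_dvd_pow p k.le_succ) (ZMod (p ^ k)) r = n) :
    ∃ s : (ZMod (p ^ (k + 1)))ˣ, r = (s : ZMod (p ^ (k + 1))) ^ 2 * n := by
  have hp : p.Prime := Fact.out
  have two_unit : IsUnit (2 : ZMod (p ^ (k + 1))) := by
    have h2 : ¬ (p : ℤ) ∣ 2 := fun h =>
      hodd ((Nat.prime_dvd_prime_iff_eq hp Nat.prime_two).1 (mod_cast h))
    exact_mod_cast (isUnit_intCast_zmod_prime_pow k.succ_ne_zero 2).2 h2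
  have p_pow_eq_zero : (p : ZMod (p ^ (k + 1))) ^ (k + 1) = 0 := mod_cast ZMod.natCast_self _
  have finite_mult : FiniteMultiplicity (p : ℤ) n :=
    ⟨k, fun h => hn ((pow_dvd_pow _ k.le_succ).trans h)⟩
  have mult_lt : multiplicity (p : ℤ) n < k := finite_mult.multiplicity_lt_iff_not_dvd.2 hn
  obtain ⟨u, hnu, hu⟩ := finite_mult.exists_eq_pow_mul_and_not_dvd
  obtain ⟨z, rfl⟩ := ZMod.intCast_surjective r
  rw [map_intCast, eq_comm, ZMod.intCast_eq_intCast_iff_dvd_sub, Nat.cast_pow] at hr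
  obtain ⟨b, hb⟩ := hr
  obtain ⟨s, hs⟩ := exists_unit_sq_mul_eq_add_pow_mul two_unit
    ((isUnit_intCast_zmod_prime_pow k.succ_ne_zero u).2 hu) mult_lt p_pow_eq_zero b
  refine ⟨s, ?_⟩
  have hnu_cast : (n : ZMod (p ^ (k + 1))) = p ^ multiplicity (p : ℤ) n * u := by
    exact_mod_cast congrArg (Int.cast : ℤ → ZMod (p ^ (k + 1))) hnu
  rw [← hnu_cast] at hs
  rw [hs, eq_add_of_sub_eq' hb]
  push_cast
  rfl

end PrimePower

section LocalDensity

variable {ι : Type*} [Fintype ι] [DecidableEq ι] (C : Matrix ι ι ℤ) {p : ℕ} [Fact p.Prime] {k : ℕ}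

theorem solutionDensity_succ_eq (hodd : p ≠ 2) {n : ℤ} (hn : ¬ (p : ℤ) ^ k ∣ n) :
    solutionDensity (coeffForm C (ZMod (p ^ (k + 1)))) n =
      solutionDensity (coeffForm C (ZMod (p ^ k))) (n : ZMod (p ^ k)) := by
  let f := ZMod.castHom (pow_dvd_pow p k.le_succ) (ZMod (p ^ k))
  have hf : Surjective f := ZMod.castHom_surjective _
  have hfn : f n = n := map_intCast f n
  have key := solutionDensity_eq_of_surjective (coeffForm C (ZMod (p ^ (k + 1))))
    (coeffForm C (ZMod (p ^ k))) f hf (f.toAddMonoidHom.compLeft ι) hf.comp_left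
    (map_coeffForm C f) (c := (n : ZMod (p ^ (k + 1))))
    fun r hr => eq_unit_sq_mul_of_castHom_eq hodd hn (hr.trans hfn)
  rwa [hfn] at key

theorem tendsto_solutionDensity (hodd : p ≠ 2) {n : ℤ} (hn : ¬ (p : ℤ) ^ k ∣ n) :
    Tendsto (fun j => solutionDensity (coeffForm C (ZMod (p ^ j))) (n : ZMod (p ^ j))) atTop
      (𝓝 (solutionDensity (coeffForm C (ZMod (p ^ k))) (n : ZMod (p ^ k)))) := by
  refine tendsto_atTop_of_eventually_const (i₀ := k) fun j hj => ?_
  induction j, hj using Nat.le_induction with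
  | base => rfl
  | succ j hkj ih =>
    have hnj : ¬ (p : ℤ) ^ j ∣ n := fun h => hn ((pow_dvd_pow _ hkj).trans h)
    rw [solutionDensity_succ_eq C hodd hnj, ih]

theorem one_sub_one_div_le_solutionDensity_of_isotropic (hk : k ≠ 0) {v w : ι → ℤ}
    (hv : (p : ℤ) ∣ coeffForm C ℤ v) (hvw : ¬ (p : ℤ) ∣ polar (coeffForm C ℤ) v w)
    (c : ZMod (p ^ k)) :
    1 - 1 / (p : ℝ) ≤ solutionDensity (coeffForm C (ZMod (p ^ k))) c := by
  let f := Int.castRingHom (ZMod (p ^ k))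
  rw [← card_units_div_card_zmod_prime_pow hk]
  refine card_units_div_card_le_solutionDensity _ (v := f ∘ v) (w := f ∘ w) ?_ ?_ c
  · rw [← map_coeffForm]
    exact isNilpotent_intCast_zmod_pow hv
  · rw [← map_polar_coeffForm]
    exact (isUnit_intCast_zmod_prime_pow hk _).2 hvw

theorem one_le_solutionDensity_of_isotropic_orthogonal (hk : k ≠ 0) {n : ℤ} {x w : ι → ℤ}
    (hxn : coeffForm C ℤ x ≡ n [ZMOD (p ^ k : ℕ)]) (hxw : ¬ (p : ℤ) ∣ polar (coeffForm C ℤ) x w)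
    (hx : ∀ y, (p : ℤ) ∣ coeffForm C ℤ y → (p : ℤ) ∣ polar (coeffForm C ℤ) x y) :
    1 ≤ solutionDensity (coeffForm C (ZMod (p ^ k))) (n : ZMod (p ^ k)) := by
  let f := Int.castRingHom (ZMod (p ^ k))
  have hfx : coeffForm C (ZMod (p ^ k)) (f ∘ x) = (n : ZMod (p ^ k)) := by
    rw [← map_coeffForm]
    exact (ZMod.intCast_eq_intCast_iff _ _ _).2 hxn
  rw [← hfx]
  refine one_le_solutionDensity_of_isUnit_of_polar_eq_one _ (w := f ∘ w) ?_ fun y hy => ?_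
  · rw [← map_polar_coeffForm]
    exact (isUnit_intCast_zmod_prime_pow hk _).2 hxw
  · obtain ⟨z, rfl⟩ := (ZMod.intCast_surjective (n := p ^ k)).comp_left y
    change polar _ (f ∘ x) (f ∘ z) = 1 at hy
    change IsUnit (coeffForm C _ (f ∘ z))
    rw [← map_polar_coeffForm] at hy
    rw [← map_coeffForm]
    have hxz : ¬ (p : ℤ) ∣ polar (coeffForm C ℤ) x z :=
      (isUnit_intCast_zmod_prime_pow hk _).1 (.of_mul_eq_one 1 (by rw [mul_one]; exact hy))
    exact (isUnit_intCast_zmod_prime_pow hk _).2 fun hz => hxz (hx z hz)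

theorem exists_one_sub_one_div_le_solutionDensity {n : ℤ} (hn : n ≠ 0) {x w : ι → ℤ}
    (hx : coeffForm C ℤ x ≡ n [ZMOD p]) (hxw : ¬ (p : ℤ) ∣ polar (coeffForm C ℤ) x w) :
    ∃ k, ¬ (p : ℤ) ^ k ∣ n ∧
      1 - 1 / (p : ℝ) ≤ solutionDensity (coeffForm C (ZMod (p ^ k))) (n : ZMod (p ^ k)) := by
  by_cases hiso : ∃ v u, (p : ℤ) ∣ coeffForm C ℤ v ∧ ¬ (p : ℤ) ∣ polar (coeffForm C ℤ) v u
  · obtain ⟨v, u, hv, hvu⟩ := hiso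
    obtain ⟨k, hk⟩ : FiniteMultiplicity (p : ℤ) n :=
      Int.finiteMultiplicity_iff.2 ⟨(Fact.out : p.Prime).ne_one, hn⟩
    exact ⟨k + 1, hk,
      one_sub_one_div_le_solutionDensity_of_isotropic C k.succ_ne_zero hv hvu _⟩
  · push Not at hiso
    have hpn : ¬ (p : ℤ) ∣ n := fun h => hxw (hiso x w (hx.dvd_iff.2 h))
    refine ⟨1, by rwa [pow_one], (sub_le_self _ (by positivity)).trans ?_⟩
    refine one_le_solutionDensity_of_isotropic_orthogonal C one_ne_zero (by rwa [pow_one]) hxw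
      fun y hy => ?_
    rw [polar_comm]
    exact hiso y x hy

theorem local_density_good_type_odd_general {n : ℤ} (hodd : p ≠ 2) (hn : n ≠ 0)
    (h : ∃ x : ι → ℤ, coeffForm C ℤ x ≡ n [ZMOD p] ∧ ¬ ∀ i, (p : ℤ) ∣ ((C + Cᵀ) *ᵥ x) i) :
    ∃ β : ℝ,
      Tendsto (fun k => solutionDensity (coeffForm C (ZMod (p ^ k))) (n : ZMod (p ^ k)))
        atTop (𝓝 β) ∧ 1 - 1 / (p : ℝ) ≤ β := by
  obtain ⟨x, hx, hgrad⟩ := h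
  obtain ⟨i, hi⟩ := not_forall.1 hgrad
  rw [← single_one_dotProduct i ((C + Cᵀ) *ᵥ x), ← polar_coeffForm] at hi
  obtain ⟨k, hk, hbound⟩ := exists_one_sub_one_div_le_solutionDensity C hn hx hi
  exact ⟨_, tendsto_solutionDensity C hodd hk, hbound⟩

end LocalDensity

section GramMatrix

/-- The upper triangular coefficient matrix of the form with Gram matrix `A`; the
division is exact because Gram matrices have even diagonal. -/
def gramCoeff (A : Matrix (Fin 4) (Fin 4) ℤ) : Matrix (Fin 4) (Fin 4) ℤ :=
  .of fun i j => if i = j then A i i / 2 else if i < j then A i j else 0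

theorem coeffForm_gramCoeff (A : Matrix (Fin 4) (Fin 4) ℤ) {R : Type*} [CommRing R]
    (x : Fin 4 → R) : coeffForm (gramCoeff A) R x = Qval A x := by
  simp only [coeffForm_apply, Qval, dotProduct, mulVec, ← Finset.filter_lt_eq_Ioi,
    Finset.sum_filter, Finset.mul_sum, ← Finset.sum_add_distrib]
  refine Finset.sum_congr rfl fun i _ => ?_
  have entry (j : Fin 4) : x i * ((gramCoeff A).map Int.cast i j * x j) =
      (if i = j then ((A i i / 2 : ℤ) : R) * x i ^ 2 else 0) +
        if i < j then (A i j : R) * (x i * x j) else 0 := by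
    rcases lt_trichotomy i j with hij | rfl | hij
    · simp only [gramCoeff, Matrix.map_apply, of_apply, hij, hij.ne, if_true, if_false]
      ring
    · simp only [gramCoeff, Matrix.map_apply, of_apply, lt_irrefl, if_true, if_false]
      ring
    · simp [gramCoeff, hij.ne', hij.not_gt]
  simp only [entry, Finset.sum_add_distrib, Finset.sum_ite_eq, Finset.mem_univ, if_true]

theorem gramCoeff_add_transpose {A : Matrix (Fin 4) (Fin 4) ℤ} (hA : IsGram A) :
    gramCoeff A + (gramCoeff A)ᵀ = A := by
  ext i j
  rcases lt_trichotomy i j with hij | rfl | hij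
  · simp [gramCoeff, hij, hij.ne, hij.ne', hij.not_gt]
  · have half_mul_two : A i i / 2 * 2 = A i i := Int.ediv_mul_cancel (hA.2 i)
    simp only [gramCoeff, Matrix.add_apply, transpose_apply, of_apply, if_true]
    rw [← mul_two, half_mul_two]
  · simp [gramCoeff, hij, hij.ne, hij.ne', hij.not_gt, hA.1.apply]

theorem solutionDensity_gramCoeff (A : Matrix (Fin 4) (Fin 4) ℤ) {p : ℕ} (hp : p ≠ 0)
    (n k : ℕ) :
    solutionDensity (coeffForm (gramCoeff A) (ZMod (p ^ k))) n =
      (localCount A p n k : ℝ) / (p : ℝ) ^ (3 * k) := by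
  have : (p : ℝ) ≠ 0 := mod_cast hp
  simp only [solutionDensity, coeffForm_gramCoeff, localCount, Nat.card_fun, Nat.card_zmod,
    Nat.card_fin]
  push_cast
  field_simp
  ring

end GramMatrix

/-- Lemma 2, part 1 (odd primes): a good-type solution mod `p` forces `β_p(Q;n) ≥ 1 - 1/p`. -/
theorem local_density_good_type_odd
    (A : Matrix (Fin 4) (Fin 4) ℤ) (p n : ℕ)
    (hA : IsGram A) (hprim : IsPrimitiveQF A) (hpd : PosDefQF A)
    (hp : p.Prime) (hodd : p ≠ 2) (hn : 0 < n)
    (h : ∃ x : Fin 4 → ℤ,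
      Qval A x ≡ (n : ℤ) [ZMOD (p : ℤ)] ∧ ¬ ∀ i, (p : ℤ) ∣ A.mulVec x i) :
    DensityBound A p n (1 - 1 / (p : ℝ)) := by
  have : Fact p.Prime := ⟨hp⟩
  simpa [DensityBound, solutionDensity_gramCoeff A hp.ne_zero] using
    local_density_good_type_odd_general (gramCoeff A) hodd (Nat.cast_ne_zero.2 hn.ne')
      (by simpa only [coeffForm_gramCoeff, gramCoeff_add_transpose hA] using h)
end

section
/- Let Q be a primitive positive-definite quaternary integer-valued quadratic form with Gram matrix A, and let n be a positive integer. If there exists x ∈ ℤ⁴ with Q(x) ≡ n (mod 8) and Ax ≢ 0 (mod 2), then the local density β_2(Q;n) exists and satisfies β_2(Q;n) ≥ 1/4. -/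
open scoped BigOperators

/-!
Let `B` be the polar form of `Q`, and let `r` be a residue class modulo `p ^ l` on which
`B(r, ·) ≠ 0`. For `k + 1 ≥ 2 * l` there is a vector `s ≡ 0` modulo `p ^ l` such that, modulo
`p ^ (k + 1)`, one has `Q(s) = 0` and `B(x, s) = p ^ k` for every `x ≡ r`. Translation by multiples
of `s` therefore permutes the `p` values of `Q` above a given value modulo `p ^ k`, all of which are
taken equally often on the class `r`: passing from `p ^ k` to `p ^ (k + 1)` multiplies the number of
solutions in `r` by exactly `p ^ (d - 1)`. If `B(r, ·) = 0`, then a solution `x ≡ r` of `Q(x) = n`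
satisfies `2 n = B(x, x) ≡ 0` modulo `p ^ l`, which is impossible for `n ≠ 0` and large `l`. Hence
the density exists, and with `l = 1` each solution modulo `p` with `B(r, ·) ≠ 0` contributes
`p ^ (1 - d)` to it.

For `p = 2` and `d = 4` it remains to find two such solutions, that is, to find a second one
from a given `x`. As `B` is alternating modulo `2`, adding a suitable vector to `x`, or to some `y`
with `B(x, y) = 1`, keeps the gradient nonzero while adjusting the value of `Q`.
-/

open QuadraticMap Finset
open scoped Matrix

theorem card_filter_map_mem_mul_card {G H : Type*} [AddGroup G] [AddGroup H] [Fintype G] [Fintype H]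
    [DecidableEq H] (f : G →+ H) (hf : Function.Surjective f) (S : Finset H) :
    #{g | f g ∈ S} * Fintype.card H = #S * Fintype.card G := by
  have card_fiber (h : H) : #{g | f g = h} = #{g | f g = 0} :=
    AddMonoidHom.card_fiber_eq_of_mem_range f (hf h) (hf 0)
  have card_filter (T : Finset H) : #{g | f g ∈ T} = #T * #{g | f g = 0} := by
    rw [card_eq_sum_card_fiberwise (f := f) (t := T) (by intro g; simp)]
    refine sum_const_nat fun h hh => ?_
    rw [filter_filter, ← card_fiber h]
    congr 1 with g
    simp only [mem_filter_univ]
    exact ⟨And.right, fun e => ⟨e ▸ hh, e⟩⟩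
  have card_G : Fintype.card G = Fintype.card H * #{g | f g = 0} := by
    simpa using card_filter univ
  rw [card_filter, card_G]
  ring

section Reduction

theorem castHom_eq_zero_iff_dvd {m n : ℕ} [NeZero n] (h : m ∣ n) (y : ZMod n) :
    ZMod.castHom h (ZMod m) y = 0 ↔ (m : ZMod n) ∣ y := by
  constructor
  · intro hy
    rw [← ZMod.natCast_zmod_val y, map_natCast, ZMod.natCast_eq_zero_iff] at hy
    simpa using Nat.cast_dvd_cast (α := ZMod n) hy
  · rintro ⟨t, rfl⟩
    rw [map_mul, map_natCast, ZMod.natCast_self, zero_mul]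

/-- Reduction `ℤ/p^k → ℤ/p^l`, used to compare solutions modulo different powers of `p`. -/
def reduce (p : ℕ) {l k : ℕ} (h : l ≤ k) : ZMod (p ^ k) →+* ZMod (p ^ l) :=
  ZMod.castHom (pow_dvd_pow p h) _

variable {p l k : ℕ}

theorem reduce_surjective (h : l ≤ k) : Function.Surjective (reduce p h) :=
  ZMod.ringHom_surjective _

theorem reduce_reduce {j : ℕ} (h : l ≤ k) (h' : k ≤ j) (y : ZMod (p ^ j)) :
    reduce p h (reduce p h' y) = reduce p (h.trans h') y :=
  RingHom.congr_fun (RingHom.ext_zmod ((reduce p h).comp (reduce p h')) _) y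

theorem reduce_comp_reduce_comp {ι : Type*} {j : ℕ} (h : l ≤ k) (h' : k ≤ j)
    (x : ι → ZMod (p ^ j)) : reduce p h ∘ reduce p h' ∘ x = reduce p (h.trans h') ∘ x :=
  funext fun i => reduce_reduce h h' (x i)

theorem natCast_pow_eq_zero_of_le (h : k ≤ l) : (p : ZMod (p ^ k)) ^ l = 0 := by
  exact_mod_cast (ZMod.natCast_eq_zero_iff _ _).2 (pow_dvd_pow p h)

variable [Fact p.Prime]

theorem reduce_eq_zero_iff (h : l ≤ k) (y : ZMod (p ^ k)) :
    reduce p h y = 0 ↔ (p : ZMod (p ^ k)) ^ l ∣ y := by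
  rw [reduce, castHom_eq_zero_iff_dvd, Nat.cast_pow]

theorem reduce_eq_reduce_iff (h : l ≤ k) (y z : ZMod (p ^ k)) :
    reduce p h y = reduce p h z ↔ (p : ZMod (p ^ k)) ^ l ∣ y - z := by
  rw [← sub_eq_zero, ← map_sub, reduce_eq_zero_iff]

theorem exists_dvd_pow_of_reduce_ne_zero (h : l ≤ k) {y : ZMod (p ^ k)} (hy : reduce p h y ≠ 0) :
    ∃ m < l, y ∣ (p : ZMod (p ^ k)) ^ m := by
  obtain ⟨m, -, hm⟩ := (Nat.dvd_prime_pow Fact.out).1 (Nat.gcd_dvd_right y.val (p ^ k))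
  refine ⟨m, ?_, y⁻¹, ?_⟩
  · by_contra! hlm
    have hval : p ^ l ∣ y.val := (pow_dvd_pow p hlm).trans (hm ▸ Nat.gcd_dvd_left _ _)
    refine hy ((reduce_eq_zero_iff h y).2 ?_)
    simpa using Nat.cast_dvd_cast (α := ZMod (p ^ k)) hval
  · rw [ZMod.mul_inv_eq_gcd, hm, Nat.cast_pow]

theorem card_filter_reduce_comp_mem {ι : Type*} [Fintype ι] [DecidableEq ι]
    (S : Finset (ι → ZMod (p ^ k))) :
    #{x : ι → ZMod (p ^ (k + 1)) | reduce p k.le_succ ∘ x ∈ S} = p ^ Fintype.card ι * #S := by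
  have hcard := card_filter_map_mem_mul_card ((reduce p k.le_succ).compLeft ι).toAddMonoidHom
    ((reduce_surjective k.le_succ).comp_left) S
  simp only [Fintype.card_fun, ZMod.card, pow_succ p k, mul_pow] at hcard
  refine Nat.eq_of_mul_eq_mul_right (pow_pos (NeZero.pos (p ^ k)) (Fintype.card ι)) ?_
  exact hcard.trans (by ring)

theorem card_filter_reduce_eq (b : ZMod (p ^ k)) :
    #{a : ZMod (p ^ (k + 1)) | reduce p k.le_succ a = b} = p := by
  have hcard := card_filter_map_mem_mul_card (reduce p k.le_succ).toAddMonoidHom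
    (reduce_surjective k.le_succ) {b}
  simp only [ZMod.card, card_singleton, mem_singleton, pow_succ p k] at hcard
  refine Nat.eq_of_mul_eq_mul_right (NeZero.pos (p ^ k)) ?_
  exact hcard.trans (by ring)

end Reduction

section IntegralForm

variable {ι : Type*} [Fintype ι] [DecidableEq ι]

/-- The quadratic form `x ↦ xᵀ U x` over `R` with integer coefficient matrix `U`. The matrix is not
assumed symmetric, so that every integer-valued form arises, with no division by `2`. -/
def integralForm (R : Type*) [CommRing R] (U : Matrix ι ι ℤ) : QuadraticForm R (ι → R) :=
  (U.map (Int.cast : ℤ → R)).toQuadraticForm'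

variable {R S : Type*} [CommRing R] [CommRing S] (U : Matrix ι ι ℤ)

theorem integralForm_apply (x : ι → R) :
    integralForm R U x = ∑ i, ∑ j, x i * (x j * U i j) := by
  simp [integralForm, Matrix.toQuadraticForm', Matrix.toLinearMap₂'_apply]

theorem polar_integralForm (x y : ι → R) :
    polar (integralForm R U) x y = (U + U.transpose).map (Int.cast : ℤ → R) *ᵥ x ⬝ᵥ y := by
  rw [integralForm, Matrix.toQuadraticForm', LinearMap.BilinMap.polar_toQuadraticMap,
    Matrix.toLinearMap₂'_apply', Matrix.toLinearMap₂'_apply', Matrix.map_add _ (by simp),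
    Matrix.add_mulVec, add_dotProduct, Matrix.dotProduct_mulVec, ← Matrix.mulVec_transpose,
    ← Matrix.transpose_map, add_comm, dotProduct_comm y]

theorem integralForm_comp (f : R →+* S) (x : ι → R) :
    integralForm S U (f ∘ x) = f (integralForm R U x) := by
  simp [integralForm_apply]

theorem polar_integralForm_comp (f : R →+* S) (x y : ι → R) :
    polar (integralForm S U) (f ∘ x) (f ∘ y) = f (polar (integralForm R U) x y) := by
  have comp_add : f ∘ x + f ∘ y = f ∘ (x + y) := by ext; simp
  simp only [polar, comp_add, integralForm_comp, map_sub]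

end IntegralForm

section Solutions

variable {ι : Type*} [Fintype ι] [DecidableEq ι] (U : Matrix ι ι ℤ)

/-- The solutions modulo `m` of `Q = a`, where `Q` is the form with coefficient matrix `U`. -/
def solutions (m : ℕ) [NeZero m] (a : ZMod m) : Finset (ι → ZMod m) :=
  {x | integralForm (ZMod m) U x = a}

open scoped Classical in
/-- The solutions modulo `m` of `Q = a` at which the gradient `B(r, ·)` of `Q` is nonzero
modulo `m`. -/
noncomputable def nonsingularSolutions (m : ℕ) [NeZero m] (a : ZMod m) : Finset (ι → ZMod m) :=
  {r ∈ solutions U m a | (integralForm (ZMod m) U).polarBilin r ≠ 0}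

variable {p l k : ℕ} [Fact p.Prime]

/-- The solutions modulo `p ^ k` of `Q = a` in the residue class `r` modulo `p ^ l`. -/
def solutionsOver (h : l ≤ k) (r : ι → ZMod (p ^ l)) (a : ZMod (p ^ k)) :
    Finset (ι → ZMod (p ^ k)) :=
  {x ∈ solutions U (p ^ k) a | reduce p h ∘ x = r}

variable {U}

theorem mem_solutions {m : ℕ} [NeZero m] {a : ZMod m} {x : ι → ZMod m} :
    x ∈ solutions U m a ↔ integralForm (ZMod m) U x = a := by
  simp [solutions]

theorem mem_nonsingularSolutions {m : ℕ} [NeZero m] {a : ZMod m} {r : ι → ZMod m} :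
    r ∈ nonsingularSolutions U m a ↔
      integralForm (ZMod m) U r = a ∧ (integralForm (ZMod m) U).polarBilin r ≠ 0 := by
  simp [nonsingularSolutions, mem_solutions]

theorem mem_solutionsOver {h : l ≤ k} {r : ι → ZMod (p ^ l)} {a : ZMod (p ^ k)}
    {x : ι → ZMod (p ^ k)} :
    x ∈ solutionsOver U h r a ↔ integralForm (ZMod (p ^ k)) U x = a ∧ reduce p h ∘ x = r := by
  simp [solutionsOver, mem_solutions]

theorem card_solutions_eq_sum_card_solutionsOver (h : l ≤ k) (a : ZMod (p ^ k)) :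
    #(solutions U (p ^ k) a) = ∑ r, #(solutionsOver U h r a) :=
  card_eq_sum_card_fiberwise fun _ _ => mem_coe.2 (mem_univ _)

theorem solutionsOver_eq_empty_of_polarBilin_eq_zero (h : l ≤ k) {r : ι → ZMod (p ^ l)}
    (hr : (integralForm (ZMod (p ^ l)) U).polarBilin r = 0) {a : ZMod (p ^ k)}
    (ha : reduce p h (2 * a) ≠ 0) : solutionsOver U h r a = ∅ := by
  refine eq_empty_of_forall_notMem fun x hx => ha ?_
  obtain ⟨rfl, rfl⟩ := mem_solutionsOver.1 hx
  rw [two_mul, ← two_nsmul, ← polar_self, ← polar_integralForm_comp]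
  exact LinearMap.congr_fun hr _

theorem exists_shift_polar_eq_pow (h : 2 * l ≤ k + 1) (hl : l ≤ k + 1) {r : ι → ZMod (p ^ l)}
    (hr : (integralForm (ZMod (p ^ l)) U).polarBilin r ≠ 0) :
    ∃ s : ι → ZMod (p ^ (k + 1)), reduce p hl ∘ s = 0 ∧ integralForm _ U s = 0 ∧
      ∀ x, reduce p hl ∘ x = r → polar (integralForm _ U) x s = (p : ZMod (p ^ (k + 1))) ^ k := by
  obtain ⟨v₀, hv₀⟩ := DFunLike.ne_iff.1 hr
  obtain ⟨v, rfl⟩ := (reduce_surjective hl).comp_left v₀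
  obtain ⟨x₀, rfl⟩ := (reduce_surjective hl).comp_left r
  rw [polarBilin_apply_apply, polar_integralForm_comp, LinearMap.zero_apply] at hv₀
  obtain ⟨m, hml, w, hw⟩ := exists_dvd_pow_of_reduce_ne_zero hl hv₀
  -- As `m < l` and `2 * l ≤ k + 1`, both `l ≤ k - m` and `k + 1 ≤ 2 * (k - m)`.
  refine ⟨((p : ZMod (p ^ (k + 1))) ^ (k - m) * w) • v, ?_, ?_, fun x hx => ?_⟩
  · ext i
    refine (reduce_eq_zero_iff hl _).2 ?_
    simp only [Pi.smul_apply, smul_eq_mul, mul_assoc]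
    exact (pow_dvd_pow _ (by omega)).mul_right _
  · rw [QuadraticMap.map_smul, mul_mul_mul_comm, ← pow_add, natCast_pow_eq_zero_of_le (by omega)]
    simp
  · obtain ⟨t, ht⟩ : (p : ZMod (p ^ (k + 1))) ^ l ∣
        polar (integralForm _ U) x v - polar (integralForm _ U) x₀ v := by
      rw [← reduce_eq_reduce_iff hl, ← polar_integralForm_comp, ← polar_integralForm_comp, hx]
    have hpow : (p : ZMod (p ^ (k + 1))) ^ (k - m) * (p : ZMod (p ^ (k + 1))) ^ l = 0 := by
      rw [← pow_add, natCast_pow_eq_zero_of_le (by omega)]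
    calc polar (integralForm _ U) x (((p : ZMod (p ^ (k + 1))) ^ (k - m) * w) • v)
        = p ^ (k - m) * p ^ m := by
          rw [polar_smul_right, smul_eq_mul]
          linear_combination w * p ^ (k - m) * ht - p ^ (k - m) * hw + w * t * hpow
      _ = p ^ k := by rw [← pow_add, Nat.sub_add_cancel (by omega)]

theorem card_solutionsOver_eq_of_reduce_eq (h : 2 * l ≤ k + 1) (hl : l ≤ k + 1)
    {r : ι → ZMod (p ^ l)} (hr : (integralForm (ZMod (p ^ l)) U).polarBilin r ≠ 0)
    {a b : ZMod (p ^ (k + 1))} (hab : reduce p k.le_succ a = reduce p k.le_succ b) :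
    #(solutionsOver U hl r a) = #(solutionsOver U hl r b) := by
  obtain ⟨t, ht⟩ := (reduce_eq_reduce_iff _ b a).1 hab.symm
  obtain ⟨s, hs, hQs, hpolar⟩ := exists_shift_polar_eq_pow h hl hr
  refine card_equiv (Equiv.addRight (t • s)) fun x => ?_
  have hred : reduce p hl ∘ (x + t • s) = reduce p hl ∘ x := by
    ext i
    have hsi : reduce p hl (s i) = 0 := congrFun hs i
    simp [hsi]
  rw [mem_solutionsOver, mem_solutionsOver, Equiv.coe_addRight, hred]
  refine and_congr_left fun hx => ?_
  have hQ : integralForm _ U (x + t • s) = integralForm _ U x + (b - a) := by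
    rw [QuadraticMap.map_add (integralForm _ U), QuadraticMap.map_smul, polar_smul_right,
      hpolar x hx, hQs, ht]
    simp [mul_comm]
  rw [hQ, add_sub_left_comm, add_eq_left, sub_eq_zero]

theorem card_solutionsOver_succ (h : 2 * l ≤ k + 1) (hl : l ≤ k) {r : ι → ZMod (p ^ l)}
    (hr : (integralForm (ZMod (p ^ l)) U).polarBilin r ≠ 0) (a : ZMod (p ^ (k + 1))) :
    p * #(solutionsOver U (hl.trans k.le_succ) r a) =
      p ^ Fintype.card ι * #(solutionsOver U hl r (reduce p k.le_succ a)) := by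
  set T : Finset (ZMod (p ^ (k + 1))) := {b | reduce p k.le_succ b = reduce p k.le_succ a} with hT
  set L : Finset (ι → ZMod (p ^ (k + 1))) :=
    {x | reduce p k.le_succ ∘ x ∈ solutionsOver U hl r (reduce p k.le_succ a)} with hL
  have mem_L (x) : x ∈ L ↔ integralForm _ U x ∈ T ∧ reduce p (hl.trans k.le_succ) ∘ x = r := by
    simp only [hL, hT, mem_filter_univ, mem_solutionsOver, integralForm_comp,
      reduce_comp_reduce_comp]
  have card_fiber (b) (hb : b ∈ T) : #{x ∈ L | integralForm _ U x = b} =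
      #(solutionsOver U (hl.trans k.le_succ) r a) := by
    rw [← card_solutionsOver_eq_of_reduce_eq h _ hr (mem_filter_univ b |>.1 hb)]
    congr 1 with x
    rw [mem_filter, mem_L, mem_solutionsOver]
    exact ⟨fun hx => ⟨hx.2, hx.1.2⟩, fun hx => ⟨⟨hx.1 ▸ hb, hx.2⟩, hx.1⟩⟩
  calc p * #(solutionsOver U (hl.trans k.le_succ) r a)
      = #T * #(solutionsOver U (hl.trans k.le_succ) r a) := by rw [card_filter_reduce_eq]
    _ = #L := by
        rw [card_eq_sum_card_fiberwise (f := integralForm _ U) (t := T)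
          fun x hx => ((mem_L x).1 hx).1]
        exact (sum_const_nat card_fiber).symm
    _ = _ := card_filter_reduce_comp_mem _

end Solutions

section Density

variable {ι : Type*} [Fintype ι]

/-- The size of a set of vectors modulo `m` relative to `m ^ (d - 1)`, the expected number of
solutions modulo `m` of one equation in `d` variables. The factor `m` in the numerator avoids the
truncated subtraction `d - 1`. -/
noncomputable def relativeDensity {m : ℕ} (S : Finset (ι → ZMod m)) : ℝ :=
  m * #S / m ^ Fintype.card ι

theorem relativeDensity_mono {m : ℕ} {S T : Finset (ι → ZMod m)} (h : #S ≤ #T) :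
    relativeDensity S ≤ relativeDensity T := by
  unfold relativeDensity
  gcongr

variable [DecidableEq ι] {U : Matrix ι ι ℤ} {p l k : ℕ} [Fact p.Prime]

theorem relativeDensity_solutions (h : l ≤ k) (a : ZMod (p ^ k)) :
    relativeDensity (solutions U (p ^ k) a) = ∑ r, relativeDensity (solutionsOver U h r a) := by
  simp only [relativeDensity, card_solutions_eq_sum_card_solutionsOver h, Nat.cast_sum, mul_sum,
    sum_div]

theorem relativeDensity_solutionsOver_of_le (h : 2 * l ≤ k + 1) (hl : l ≤ k) {j : ℕ} (hkj : k ≤ j)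
    {r : ι → ZMod (p ^ l)} (hr : (integralForm (ZMod (p ^ l)) U).polarBilin r ≠ 0) (n : ℤ) :
    relativeDensity (solutionsOver U (hl.trans hkj) r n) =
      relativeDensity (solutionsOver U hl r n) := by
  have hp : (p : ℝ) ≠ 0 := mod_cast NeZero.ne p
  induction j, hkj using Nat.le_induction with
  | base => rfl
  | succ j hkj ih =>
    rw [← ih]
    have hcard := card_solutionsOver_succ (by omega) (hl.trans hkj) hr (n : ZMod (p ^ (j + 1)))
    rw [map_intCast] at hcard
    have hcard' : (p : ℝ) * #(solutionsOver U (hl.trans (hkj.trans j.le_succ)) r n) =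
        p ^ Fintype.card ι * #(solutionsOver U (hl.trans hkj) r n) := mod_cast hcard
    rw [relativeDensity, relativeDensity, div_eq_div_iff (by simp [hp]) (by simp [hp])]
    push_cast
    rw [pow_succ (p : ℝ) j, mul_pow]
    linear_combination (p : ℝ) ^ j * (p ^ j) ^ Fintype.card ι * hcard'

theorem relativeDensity_solutions_of_le {n : ℤ} (hn : ((2 * n : ℤ) : ZMod (p ^ l)) ≠ 0)
    (h : 2 * l ≤ k + 1) (hl : l ≤ k) {j : ℕ} (hkj : k ≤ j) :
    relativeDensity (solutions U (p ^ j) n) = relativeDensity (solutions U (p ^ k) n) := by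
  rw [relativeDensity_solutions (hl.trans hkj), relativeDensity_solutions hl]
  refine sum_congr rfl fun r _ => ?_
  by_cases hr : (integralForm (ZMod (p ^ l)) U).polarBilin r = 0
  · have reduce_ne_zero {i : ℕ} (hi : l ≤ i) : reduce p hi (2 * n) ≠ 0 := by
      rw [map_mul, map_ofNat, map_intCast]
      exact_mod_cast hn
    rw [solutionsOver_eq_empty_of_polarBilin_eq_zero _ hr (reduce_ne_zero _),
      solutionsOver_eq_empty_of_polarBilin_eq_zero _ hr (reduce_ne_zero _)]
    simp [relativeDensity]
  · exact relativeDensity_solutionsOver_of_le h hl hkj hr n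

theorem relativeDensity_nonsingularSolutions_le (hk : 1 ≤ k) (n : ℤ) :
    relativeDensity (nonsingularSolutions U (p ^ 1) n) ≤
      relativeDensity (solutions U (p ^ k) n) := by
  have mem_solutionsOver_self {r} (hr : r ∈ nonsingularSolutions U (p ^ 1) n) :
      r ∈ solutionsOver U le_rfl r n :=
    mem_solutionsOver.2 ⟨(mem_nonsingularSolutions.1 hr).1, by ext; simp [reduce]⟩
  calc relativeDensity (nonsingularSolutions U (p ^ 1) n)
      = ∑ r ∈ nonsingularSolutions U (p ^ 1) n, relativeDensity {r} := by
        simp only [relativeDensity, card_singleton, sum_const, nsmul_eq_mul]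
        ring
    _ ≤ ∑ r ∈ nonsingularSolutions U (p ^ 1) n, relativeDensity (solutionsOver U hk r n) := by
        refine sum_le_sum fun r hr => ?_
        rw [relativeDensity_solutionsOver_of_le (k := 1) le_rfl le_rfl hk
          (mem_nonsingularSolutions.1 hr).2]
        exact relativeDensity_mono
          (card_le_card (singleton_subset_iff.2 (mem_solutionsOver_self hr)))
    _ ≤ ∑ r, relativeDensity (solutionsOver U hk r n) :=
        sum_le_univ_sum_of_nonneg fun r => by unfold relativeDensity; positivity
    _ = relativeDensity (solutions U (p ^ k) n) := (relativeDensity_solutions hk _).symm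

end Density

section BinaryField

theorem exists_ne_zero_polar_eq_zero {K V : Type*} [Field K] [AddCommGroup V] [Module K V]
    [FiniteDimensional K V] (hV : 2 < Module.finrank K V) (Q : QuadraticForm K V) (x y : V) :
    ∃ z ≠ 0, polar Q x z = 0 ∧ polar Q y z = 0 := by
  obtain ⟨z, hz, hz0⟩ := Submodule.exists_mem_ne_zero_of_ne_bot <|
    LinearMap.ker_ne_bot_of_finrank_lt (f := (Q.polarBilin x).prod (Q.polarBilin y)) (by simpa)
  exact ⟨z, hz0, by simpa using hz⟩

theorem exists_ne_map_eq_polarBilin_ne_zero {V : Type*} [AddCommGroup V] [Module (ZMod 2) V]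
    [FiniteDimensional (ZMod 2) V] (hV : 2 < Module.finrank (ZMod 2) V)
    (Q : QuadraticForm (ZMod 2) V) {x : V} (hx : Q.polarBilin x ≠ 0) :
    ∃ y ≠ x, Q y = Q x ∧ Q.polarBilin y ≠ 0 := by
  have eq_one {c : ZMod 2} (hc : c ≠ 0) : c = 1 := Fin.eq_one_of_ne_zero c hc
  have polar_self_eq (v : V) : polar Q v v = 0 := by
    rw [polar_self, CharTwo.two_nsmul]
  have ne_zero_of_polar {v w : V} (h : polar Q v w = 1) : Q.polarBilin v ≠ 0 := fun h0 => by
    simpa [h] using LinearMap.congr_fun h0 w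
  obtain ⟨y, hy⟩ := DFunLike.ne_iff.1 hx
  replace hy : polar Q x y = 1 := eq_one hy
  by_cases hone : ∃ v, polar Q x v = 1 ∧ Q v = 1
  · obtain ⟨v, hxv, hv⟩ := hone
    refine ⟨x + v, ?_, ?_, ne_zero_of_polar (w := v) ?_⟩
    · intro h
      simp [add_eq_left.1 h] at hxv
    · rw [QuadraticMap.map_add Q, hxv, hv, add_assoc, CharTwo.add_self_eq_zero, add_zero]
    · rw [polar_add_left, hxv, polar_self_eq, add_zero]
  have map_eq_zero {v : V} (hv : polar Q x v = 1) : Q v = 0 := by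
    by_contra h
    exact hone ⟨v, hv, eq_one h⟩
  by_cases hQx : Q x = 0
  · refine ⟨y, ?_, (map_eq_zero hy).trans hQx.symm,
      ne_zero_of_polar ((polar_comm Q y x).trans hy)⟩
    rintro rfl
    simp [polar_self_eq] at hy
  obtain ⟨z, hz0, hxz, hyz⟩ := exists_ne_zero_polar_eq_zero hV Q x y
  have hQz : Q z = 0 := by
    have hyz' : Q (y + z) = 0 := map_eq_zero (by rw [polar_add_right, hy, hxz, add_zero])
    rwa [QuadraticMap.map_add Q, hyz, map_eq_zero hy, zero_add, add_zero] at hyz'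
  refine ⟨x + z, by simpa using hz0, ?_, ne_zero_of_polar (w := y) ?_⟩
  · rw [QuadraticMap.map_add Q, hxz, hQz, add_zero, add_zero]
  · rw [polar_add_left, hy, polar_comm, hyz, add_zero]

end BinaryField

section GramMatrix

/-- The upper triangular matrix of coefficients of the form with Gram matrix `A`. -/
def coeffMatrix (A : Matrix (Fin 4) (Fin 4) ℤ) : Matrix (Fin 4) (Fin 4) ℤ :=
  .of fun i j => if i = j then A i i / 2 else if i < j then A i j else 0

variable {A : Matrix (Fin 4) (Fin 4) ℤ}

theorem Qval_eq_integralForm {R : Type*} [CommRing R] (x : Fin 4 → R) :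
    Qval A x = integralForm R (coeffMatrix A) x := by
  have filter_Ioi (i : Fin 4) (f : Fin 4 → R) :
      ∑ j ∈ Ioi i, f j = ∑ j, if i < j then f j else 0 := by
    rw [← sum_filter]
    congr 1 with j
    simp
  simp only [Qval, filter_Ioi, integralForm_apply, ← sum_add_distrib, coeffMatrix, Matrix.of_apply]
  simp only [Fin.sum_univ_four, Fin.isValue, not_lt_zero, ↓reduceIte, Fin.lt_one_iff,
    Nat.reduceAdd, zero_add, Fin.reduceLT, one_ne_zero, Fin.reduceEq, lt_self_iff_false, add_zero,
    Int.cast_ite, Int.cast_zero, mul_ite, mul_zero, zero_ne_one]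
  ring

theorem coeffMatrix_add_transpose (hA : IsGram A) :
    coeffMatrix A + (coeffMatrix A).transpose = A := by
  ext i j
  have hsymm := hA.1.apply i j
  rcases lt_trichotomy i j with hij | rfl | hij
  · simp [coeffMatrix, hij, hij.ne, hij.ne', hij.not_gt]
  · simpa [coeffMatrix, ← two_mul] using Int.mul_ediv_cancel' (hA.2 i)
  · simp [coeffMatrix, hij, hij.ne, hij.ne', hij.not_gt, hsymm]

theorem polarBilin_intCast_ne_zero (hA : IsGram A) {m : ℕ} {x : Fin 4 → ℤ}
    (hx : ¬ ∀ i, (m : ℤ) ∣ A.mulVec x i) :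
    (integralForm (ZMod m) (coeffMatrix A)).polarBilin (Int.castRingHom (ZMod m) ∘ x) ≠ 0 := by
  contrapose! hx
  intro i
  rw [← ZMod.intCast_zmod_eq_zero_iff_dvd]
  have map_cast : A.map (Int.cast : ℤ → ℤ) = A := Matrix.ext fun _ _ => Int.cast_id
  have h := LinearMap.congr_fun hx (Int.castRingHom (ZMod m) ∘ Pi.single i 1)
  rw [polarBilin_apply_apply, polar_integralForm_comp, polar_integralForm,
    coeffMatrix_add_transpose hA, map_cast] at h
  simpa using h

theorem localCount_div_eq_relativeDensity (p n k : ℕ) [Fact p.Prime] :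
    (localCount A p n k : ℝ) / p ^ (3 * k) =
      relativeDensity (solutions (coeffMatrix A) (p ^ k) (n : ℤ)) := by
  have hp : (p : ℝ) ≠ 0 := mod_cast NeZero.ne p
  have hcount : localCount A p n k = #(solutions (coeffMatrix A) (p ^ k) (n : ℤ)) := by
    simp only [localCount, Qval_eq_integralForm, Nat.card_eq_fintype_card, Fintype.card_subtype,
      solutions, Int.cast_natCast]
  rw [hcount, relativeDensity, Fintype.card_fin, Nat.cast_pow, ← pow_mul]
  field_simp
  ring

theorem densityBound_relativeDensity_nonsingularSolutions (A : Matrix (Fin 4) (Fin 4) ℤ) (p : ℕ)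
    [Fact p.Prime] {n : ℕ} (hn : n ≠ 0) :
    DensityBound A p n
      (relativeDensity (nonsingularSolutions (coeffMatrix A) (p ^ 1) (n : ℤ))) := by
  have hl : ((2 * n : ℤ) : ZMod (p ^ (2 * n))) ≠ 0 := by
    have h2n : ((2 * n : ℕ) : ZMod (p ^ (2 * n))) ≠ 0 := by
      rw [Ne, ZMod.natCast_eq_zero_iff]
      exact Nat.not_dvd_of_pos_of_lt (by omega) (Nat.lt_pow_self (Nat.Prime.one_lt Fact.out))
    exact_mod_cast h2n
  refine ⟨relativeDensity (solutions (coeffMatrix A) (p ^ (4 * n)) (n : ℤ)), ?_,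
    relativeDensity_nonsingularSolutions_le (by omega) _⟩
  refine tendsto_const_nhds.congr' ?_
  filter_upwards [Filter.eventually_ge_atTop (4 * n)] with k hk
  rw [localCount_div_eq_relativeDensity,
    relativeDensity_solutions_of_le hl (by omega) (by omega) hk]

theorem two_le_card_nonsingularSolutions (hA : IsGram A) {n : ℤ} {x : Fin 4 → ℤ}
    (hn : Qval A x ≡ n [ZMOD 2]) (hx : ¬ ∀ i, (2 : ℤ) ∣ A.mulVec x i) :
    2 ≤ #(nonsingularSolutions (coeffMatrix A) (2 ^ 1) n) := by
  have hr := polarBilin_intCast_ne_zero hA (m := 2) hx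
  set r := Int.castRingHom (ZMod 2) ∘ x with hr_def
  have hQr : integralForm (ZMod 2) (coeffMatrix A) r = n := by
    rw [hr_def, integralForm_comp, ← Qval_eq_integralForm]
    exact (ZMod.intCast_eq_intCast_iff _ _ 2).2 hn
  obtain ⟨y, hne, hQy, hy⟩ := exists_ne_map_eq_polarBilin_ne_zero (by simp) _ hr
  exact one_lt_card.2 ⟨y, mem_nonsingularSolutions.2 ⟨hQy.trans hQr, hy⟩,
    r, mem_nonsingularSolutions.2 ⟨hQr, hr⟩, hne⟩

theorem local_density_good_type_two_general (hA : IsGram A) {n : ℕ} (hn : n ≠ 0)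
    (h : ∃ x : Fin 4 → ℤ, Qval A x ≡ (n : ℤ) [ZMOD 2] ∧ ¬ ∀ i, (2 : ℤ) ∣ A.mulVec x i) :
    DensityBound A 2 n (1 / 4 : ℝ) := by
  obtain ⟨x, hQ, hx⟩ := h
  obtain ⟨β, hβ, hle⟩ := densityBound_relativeDensity_nonsingularSolutions A 2 hn
  refine ⟨β, hβ, le_trans ?_ hle⟩
  have hcard : (2 : ℝ) ≤ #(nonsingularSolutions (coeffMatrix A) (2 ^ 1) (n : ℤ)) :=
    Nat.ofNat_le_cast.2 (two_le_card_nonsingularSolutions hA hQ hx)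
  rw [relativeDensity, Fintype.card_fin, Nat.cast_pow, Nat.cast_two]
  linarith

end GramMatrix

/-- Lemma 2, part 1 (p = 2): a good-type solution mod 8 forces `β_2(Q;n) ≥ 1/4`. -/
theorem local_density_good_type_two
    (A : Matrix (Fin 4) (Fin 4) ℤ) (n : ℕ)
    (hA : IsGram A) (hprim : IsPrimitiveQF A) (hpd : PosDefQF A) (hn : 0 < n)
    (h : ∃ x : Fin 4 → ℤ,
      Qval A x ≡ (n : ℤ) [ZMOD 8] ∧ ¬ ∀ i, (2 : ℤ) ∣ A.mulVec x i) :
    DensityBound A 2 n (1 / 4 : ℝ) := by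
  obtain ⟨x, hQ, hx⟩ := h
  exact local_density_good_type_two_general hA hn.ne' ⟨x, hQ.of_dvd (by norm_num), hx⟩
end

section
/- Let Q be a primitive positive-definite quaternary integer-valued quadratic form with discriminant D(Q), let p be an odd prime, and let n be a positive integer. If there exists x ∈ ℤ_p⁴ with Q(x) = n and x ∉ p·ℤ_p⁴ (i.e. n is primitively represented by Q over ℤ_p), then the local density β_p(Q;n) exists and satisfies β_p(Q;n) ≥ p^(−⌊ord_p(D(Q))/2⌋) · (1 − 1/p), where ord_p denotes the p-adic valuation. -/
open scoped BigOperators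

/-!
Over `ℤ_[p]` with `p` odd the Gram matrix is congruent to a diagonal one, so it suffices to count
solutions of a diagonal equation `∑ aᵢ xᵢ² = n` modulo `p ^ k`. Once `k` exceeds twice the valuation
of `n`, Euler's identity bounds the valuation of the differential at every solution modulo `p ^ k`,
and Hensel's lemma multiplies the number of solutions by `p ^ 3` at each step: the density is an
eventually constant sequence.

If some solution modulo `p` is nonsingular, the density is at least `1 - 1 / p`. Indeed the
solutions over `𝔽_p` are counted either along the lines in the direction of an isotropic vector, or
by reflecting the given solution in anisotropic vectors, and nonsingular solutions lift.

In general let `f` be the least valuation of a term `aᵢ xᵢ²` of the given solution. Substituting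
`xᵢ = p ^ cᵢ zᵢ`, where `cᵢ` is `(f - ord_p aᵢ) / 2` rounded up (or `0`), and dividing by `p ^ f`
produces a form with a nonsingular solution, at the cost of a factor `p ^ (f - ∑ cᵢ)`. As `x` and
the form are primitive, `∑ cᵢ ≤ f + ⌊ord_p D / 2⌋` unless three of the `aᵢ` are units and `p ∣ n`;
in that case the ternary unit part is isotropic over `𝔽_p`, which gives a nonsingular solution.
-/

section Counting

variable {α β G H : Type*}

theorem card_eq_mul_of_card_fiber_eq [Finite α] [Finite β] (f : α → β) {c : ℕ}
    (hf : ∀ y, Nat.card {x // f x = y} = c) : Nat.card α = c * Nat.card β := by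
  have := Fintype.ofFinite β
  rw [Nat.card_congr (Equiv.sigmaFiberEquiv f).symm, Nat.card_sigma,
    Finset.sum_congr rfl fun y _ => hf y, Finset.sum_const, Finset.card_univ, smul_eq_mul,
    mul_comm, Nat.card_eq_fintype_card]

theorem card_le_mul_of_card_fiber_le [Finite α] [Finite β] (f : α → β) {c : ℕ}
    (hf : ∀ y, Nat.card {x // f x = y} ≤ c) : Nat.card α ≤ c * Nat.card β := by
  have := Fintype.ofFinite β
  rw [Nat.card_congr (Equiv.sigmaFiberEquiv f).symm, Nat.card_sigma, mul_comm,
    Nat.card_eq_fintype_card, ← smul_eq_mul]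
  exact Finset.sum_le_card_nsmul _ _ _ fun y _ => hf y

variable [AddCommGroup G] [AddCommGroup H]

theorem card_fiber_eq_card_ker (f : G →+ H) {y : H} (hy : y ∈ f.range) :
    Nat.card {x // f x = y} = Nat.card f.ker := by
  obtain ⟨x, rfl⟩ := hy
  exact Nat.card_congr <| (Equiv.addRight (-x)).subtypeEquiv fun z => by
    rw [Equiv.coe_addRight, AddMonoidHom.mem_ker, map_add, map_neg, add_neg_eq_zero]

theorem card_fiber_le_card_ker (f : G →+ H) (y : H) :
    Nat.card {x // f x = y} ≤ Nat.card f.ker := by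
  by_cases hy : y ∈ f.range
  · exact (card_fiber_eq_card_ker f hy).le
  · have : IsEmpty {x // f x = y} := ⟨fun x => hy ⟨x, x.2⟩⟩
    simp only [Nat.card_of_isEmpty, zero_le]

theorem card_preimage_eq_card_ker_mul [Finite G] [Finite H] (f : G →+ H) {P : H → Prop}
    (hP : ∀ y, P y → y ∈ f.range) :
    Nat.card {x // P (f x)} = Nat.card f.ker * Nat.card {y // P y} := by
  refine card_eq_mul_of_card_fiber_eq (fun x : {x // P (f x)} => (⟨f x, x.2⟩ : {y // P y})) ?_
  rintro ⟨y, hy⟩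
  rw [← card_fiber_eq_card_ker f (hP y hy)]
  refine Nat.card_congr ⟨fun x => ⟨x.1, Subtype.ext_iff.1 x.2⟩,
    fun x => ⟨⟨x.1, by rw [x.2]; exact hy⟩, Subtype.ext x.2⟩, fun _ => rfl, fun _ => rfl⟩

/- Count the pairs `(x, t)` with `P (x + g t)`: translating by `g t` shows that each `t` contributes
the same number. -/
theorem sum_card_translates [Fintype G] [Fintype H] (g : H →+ G) (P : G → Prop) :
    ∑ x, Nat.card {t // P (x + g t)} = Fintype.card H * Nat.card {x // P x} := by
  classical
  simp only [Nat.card_eq_fintype_card, Fintype.card_subtype, Finset.card_filter]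
  rw [Finset.sum_comm, ← smul_eq_mul, ← Finset.card_univ, ← Finset.sum_const]
  exact Finset.sum_congr rfl fun t _ =>
    Equiv.sum_comp (Equiv.addRight (g t)) fun x => if P x then 1 else 0

theorem card_eq_mul_of_card_translates_eq [Finite G] [Finite H] (g : H →+ G) {P P' : G → Prop}
    {c : ℕ} (hPP' : ∀ x, P x → P' x)
    (h : ∀ x, P' x → Nat.card {t // P' (x + g t)} = c * Nat.card {t // P (x + g t)}) :
    Nat.card {x // P' x} = c * Nat.card {x // P x} := by
  have := Fintype.ofFinite G
  have := Fintype.ofFinite H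
  have hcoset (x : G) : Nat.card {t // P' (x + g t)} = c * Nat.card {t // P (x + g t)} := by
    by_cases hx : ∃ t₀, P' (x + g t₀)
    · obtain ⟨t₀, ht₀⟩ := hx
      have rebase (S : G → Prop) :
          Nat.card {t // S (x + g t₀ + g t)} = Nat.card {t // S (x + g t)} :=
        Nat.card_congr <| (Equiv.addLeft t₀).subtypeEquiv fun t => by
          rw [Equiv.coe_addLeft, map_add, add_assoc]
      rw [← rebase P', ← rebase P, h _ ht₀]
    · push Not at hx
      have : IsEmpty {t // P' (x + g t)} := ⟨fun t => hx t t.2⟩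
      have : IsEmpty {t // P (x + g t)} := ⟨fun t => hx t (hPP' _ t.2)⟩
      simp only [Nat.card_of_isEmpty, mul_zero]
  refine Nat.eq_of_mul_eq_mul_left (Fintype.card_pos (α := H)) ?_
  rw [← sum_card_translates g, mul_left_comm, ← sum_card_translates g, Finset.mul_sum]
  exact Finset.sum_congr rfl fun x _ => hcoset x

end Counting

section QuadraticForm

open QuadraticMap

variable {R V : Type*} [CommRing R] [AddCommGroup V] [Module R V]

/-- A point `x` is nonsingular for `Q` if the differential `polar Q x` of `Q` at `x` attains a unit,
so that Hensel's lemma applies at `x`. -/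
def IsNonsingularAt (Q : QuadraticForm R V) (x : V) : Prop :=
  ∃ t, IsUnit (polar Q x t)

theorem map_add_smul_eq (Q : QuadraticForm R V) (x v : V) (s : R) :
    Q (x + s • v) = Q x + s * polar Q x v + s * s * Q v := by
  rw [QuadraticMap.map_add ⇑Q, QuadraticMap.map_smul, polar_smul_right, smul_eq_mul, smul_eq_mul]
  ring

end QuadraticForm

section FiniteField

open QuadraticMap

variable {F V : Type*} [Field F] [AddCommGroup V] [Module F V]

theorem IsNonsingularAt.polarBilin_ne_zero {Q : QuadraticForm F V} {x : V}
    (hx : IsNonsingularAt Q x) : polarBilin Q x ≠ 0 := fun h => by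
  obtain ⟨t, ht⟩ := hx
  exact ht.ne_zero (LinearMap.congr_fun h t)

variable [Finite F] [Finite V]

theorem card_mul_card_ker {φ : V →ₗ[F] F} (hφ : φ ≠ 0) :
    Nat.card φ.toAddMonoidHom.ker * Nat.card F = Nat.card V := by
  have hsurj := LinearMap.surjective_iff_ne_zero.2 hφ
  simpa using (card_preimage_eq_card_ker_mul φ.toAddMonoidHom (P := fun _ => True)
    fun y _ => hsurj y).symm

theorem card_subtype_ne_zero {φ : V →ₗ[F] F} (hφ : φ ≠ 0) :
    Nat.card {x // φ x ≠ 0} = Nat.card φ.toAddMonoidHom.ker * (Nat.card F - 1) := by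
  have hsurj := LinearMap.surjective_iff_ne_zero.2 hφ
  have hunits : Nat.card {y : F // y ≠ 0} = Nat.card F - 1 := by
    rw [← Nat.card_congr unitsEquivNeZero, Nat.card_units]
  rw [← hunits]
  exact card_preimage_eq_card_ker_mul φ.toAddMonoidHom (P := (· ≠ 0)) fun y _ => hsurj y

/- Each line in the direction of `v` on which `polar Q · v` does not vanish contains a solution. -/
theorem card_solutions_ge_of_isotropic (Q : QuadraticForm F V) (n : F) {v : V} (hv : Q v = 0)
    (hns : IsNonsingularAt Q v) :
    (Nat.card F - 1) * Nat.card V ≤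
      Nat.card F ^ 2 * Nat.card {x // Q x = n ∧ IsNonsingularAt Q x} := by
  have hφ := hns.polarBilin_ne_zero
  let s (x : V) : F := (n - Q x) / polar Q v x
  let f (x : {x // polarBilin Q v x ≠ 0}) : {x // Q x = n ∧ IsNonsingularAt Q x} :=
    ⟨x.1 + s x.1 • v, by
      have hx : polar Q v x.1 ≠ 0 := x.2
      rw [map_add_smul_eq, hv, mul_zero, add_zero, polar_comm _ x.1 v, div_mul_cancel₀ _ hx,
        add_sub_cancel], by
      refine ⟨v, isUnit_iff_ne_zero.2 ?_⟩
      rw [polar_comm, polar_add_right, polar_smul_right, polar_self, hv, smul_zero, smul_zero,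
        add_zero]
      exact x.2⟩
  have hfib (y) : Nat.card {x // f x = y} ≤ Nat.card F := by
    refine Nat.card_le_card_of_injective (fun x => s x.1.1) fun x x' hxx' => ?_
    have h : x.1.1 + s x.1.1 • v = x'.1.1 + s x'.1.1 • v :=
      congrArg Subtype.val (x.2.trans x'.2.symm)
    have hs : s x.1.1 = s x'.1.1 := hxx'
    rw [hs] at h
    exact Subtype.ext (Subtype.ext (add_right_cancel h))
  calc (Nat.card F - 1) * Nat.card V
      = Nat.card F * Nat.card {x // polarBilin Q v x ≠ 0} := by
        rw [← card_mul_card_ker hφ, card_subtype_ne_zero hφ]; ring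
    _ ≤ Nat.card F * (Nat.card F * Nat.card {x // Q x = n ∧ IsNonsingularAt Q x}) :=
        Nat.mul_le_mul_left _ (card_le_mul_of_card_fiber_le f hfib)
    _ = Nat.card F ^ 2 * Nat.card {x // Q x = n ∧ IsNonsingularAt Q x} := by ring

/- The reflection of `y` in an anisotropic `v` with `polar Q y v = 1` is `y - (Q v)⁻¹ • v`, and it
determines `v`. -/
theorem card_solutions_ge_of_anisotropic {Q : QuadraticForm F V} {n : F} {y : V} (hy : Q y = n)
    (hns : IsNonsingularAt Q y) (haniso : ∀ v, polar Q y v = 1 → Q v ≠ 0) :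
    Nat.card V ≤ Nat.card F * Nat.card {x // Q x = n ∧ IsNonsingularAt Q x} := by
  have hφ := hns.polarBilin_ne_zero
  let f (v : {v // polarBilin Q y v = 1}) : {x // Q x = n ∧ IsNonsingularAt Q x} :=
    ⟨y + -(Q v.1)⁻¹ • v.1, by
      have hv : polar Q y v.1 = 1 := v.2
      have := haniso _ hv
      rw [map_add_smul_eq, hy, hv]
      field_simp
      ring, by
      have hv : polar Q y v.1 = 1 := v.2
      have := haniso _ hv
      refine ⟨v, isUnit_iff_ne_zero.2 ?_⟩
      rw [polar_add_left, polar_smul_left, polar_self, hv]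
      simp only [nsmul_eq_mul, smul_eq_mul, Nat.cast_ofNat]
      field_simp
      norm_num⟩
  have hf : Function.Injective f := fun v w hvw => by
    have hinv (v : V) (hv : Q v ≠ 0) : v = (Q ((Q v)⁻¹ • v))⁻¹ • (Q v)⁻¹ • v := by
      rw [QuadraticMap.map_smul, smul_smul, smul_eq_mul]
      field_simp
      rw [one_smul]
    have h : (Q v.1)⁻¹ • v.1 = (Q w.1)⁻¹ • w.1 := by
      simpa [f] using hvw
    apply Subtype.ext
    rw [hinv v (haniso _ v.2), h, ← hinv w (haniso _ w.2)]
  obtain ⟨v₁, hv₁⟩ := LinearMap.surjective_iff_ne_zero.2 hφ 1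
  rw [← card_mul_card_ker hφ, mul_comm,
    ← card_fiber_eq_card_ker (polarBilin Q y).toAddMonoidHom ⟨v₁, hv₁⟩]
  exact Nat.mul_le_mul_left _ (Nat.card_le_card_of_injective f hf)

theorem card_solutions_ge_of_isNonsingularAt {Q : QuadraticForm F V} {n : F} {y : V} (hy : Q y = n)
    (hns : IsNonsingularAt Q y) :
    (Nat.card F - 1) * Nat.card V ≤
      Nat.card F ^ 2 * Nat.card {x // Q x = n ∧ IsNonsingularAt Q x} := by
  by_cases! haniso : ∀ v, polar Q y v = 1 → Q v ≠ 0
  · calc (Nat.card F - 1) * Nat.card V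
        ≤ Nat.card F * Nat.card V := Nat.mul_le_mul_right _ (Nat.sub_le _ _)
      _ ≤ Nat.card F * (Nat.card F * Nat.card {x // Q x = n ∧ IsNonsingularAt Q x}) :=
          Nat.mul_le_mul_left _ (card_solutions_ge_of_anisotropic hy hns haniso)
      _ = Nat.card F ^ 2 * Nat.card {x // Q x = n ∧ IsNonsingularAt Q x} := by ring
  · obtain ⟨v, hyv, hv⟩ := haniso
    exact card_solutions_ge_of_isotropic Q n hv ⟨y, by rw [polar_comm, hyv]; exact isUnit_one⟩

end FiniteField

section Hensel

open QuadraticMap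

theorem card_zmod_mul_eq_zero (N m : ℕ) [NeZero N] :
    Nat.card {y : ZMod N // (m : ZMod N) * y = 0} = N.gcd m := by
  have h := IsAddCyclic.card_nsmulAddMonoidHom_ker (ZMod N) m
  rw [Nat.card_zmod] at h
  rw [← h]
  exact Nat.card_congr (Equiv.subtypeEquivRight fun y => by
    rw [AddMonoidHom.mem_ker, nsmulAddMonoidHom_apply, nsmul_eq_mul])

variable {p : ℕ} [hp : Fact p.Prime]

theorem zmod_pow_mul_eq_zero_iff {k j : ℕ} {y : ZMod (p ^ (k + j))} :
    (p : ZMod _) ^ j * y = 0 ↔ (p : ZMod _) ^ k ∣ y := by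
  obtain ⟨y, rfl⟩ := ZMod.natCast_zmod_surjective y
  refine ⟨fun h => ?_, ?_⟩
  · rw [← Nat.cast_pow, ← Nat.cast_mul, ZMod.natCast_eq_zero_iff, add_comm k, pow_add] at h
    exact_mod_cast Nat.cast_dvd_cast (Nat.dvd_of_mul_dvd_mul_left (pow_pos hp.out.pos j) h)
  · rintro ⟨c, hc⟩
    rw [hc, ← mul_assoc, ← pow_add, add_comm j, ← Nat.cast_pow, ZMod.natCast_self, zero_mul]

theorem card_zmod_prime_mul_eq_zero (k : ℕ) :
    Nat.card {y : ZMod (p ^ (k + 1)) // (p : ZMod _) * y = 0} = p := by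
  rw [card_zmod_mul_eq_zero, Nat.gcd_eq_right (dvd_pow_self p k.succ_ne_zero)]

/- On the coset of `x` by `p ^ (k - v) V` the form `Q` is affine, with slope `p ^ (k - v) polar Q x`
taking the value `p ^ k`. -/
theorem card_lift_coset {k v : ℕ} (hv : 2 * v < k) {V : Type*} [AddCommGroup V]
    [Module (ZMod (p ^ (k + 1))) V] [Finite V] (Q : QuadraticForm (ZMod (p ^ (k + 1))) V)
    (n : ZMod (p ^ (k + 1))) {x : V} (hx : (p : ZMod _) * (Q x - n) = 0)
    (hpolar : ∃ t, polar Q x t = (p : ZMod _) ^ v) :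
    Nat.card {t // (p : ZMod _) *
        (Q (x + (p : ZMod (p ^ (k + 1))) ^ (k - v) • t) - n) = 0} =
      p * Nat.card {t // Q (x + (p : ZMod (p ^ (k + 1))) ^ (k - v) • t) = n} := by
  set q : ZMod (p ^ (k + 1)) := (p : ZMod _) ^ (k - v) with hq
  obtain ⟨t₁, ht₁⟩ := hpolar
  have hqq : q * q = 0 := by
    rw [hq, ← pow_add]
    exact pow_eq_zero_of_le (by omega : k + 1 ≤ k - v + (k - v))
      (by rw [← Nat.cast_pow, ZMod.natCast_self])
  let f : V →+ ZMod (p ^ (k + 1)) := (q • polarBilin Q x).toAddMonoidHom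
  have hf (t : V) : f t = q * polar Q x t := rfl
  have hexpand (t : V) : Q (x + q • t) = Q x + f t := by
    rw [map_add_smul_eq, hqq, zero_mul, add_zero, hf]
  have hrange (y : ZMod (p ^ (k + 1))) (hy : (p : ZMod _) * y = 0) :
      y ∈ f.range := by
    obtain ⟨c, rfl⟩ := zmod_pow_mul_eq_zero_iff.1 (by rwa [pow_one])
    refine ⟨c • t₁, ?_⟩
    rw [hf, polar_smul_right, ht₁, smul_eq_mul, mul_left_comm, hq, ← pow_add,
      Nat.sub_add_cancel (by omega), mul_comm]
  have hfiber : Nat.card {t // Q (x + q • t) = n} = Nat.card f.ker := by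
    rw [← card_fiber_eq_card_ker f (hrange (n - Q x) (by linear_combination -hx))]
    exact Nat.card_congr (Equiv.subtypeEquivRight fun t => by rw [hexpand, eq_sub_iff_add_eq'])
  calc Nat.card {t // (p : ZMod _) * (Q (x + q • t) - n) = 0}
      = Nat.card {t // (p : ZMod _) * f t = 0} :=
        Nat.card_congr (Equiv.subtypeEquivRight fun t => by
          rw [hexpand, add_sub_right_comm, mul_add, hx, zero_add])
    _ = Nat.card f.ker * p := by
        rw [card_preimage_eq_card_ker_mul f hrange, card_zmod_prime_mul_eq_zero]
    _ = p * Nat.card {t // Q (x + q • t) = n} := by rw [hfiber, mul_comm]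

theorem card_lift {k v : ℕ} (hv : 2 * v < k) {V : Type*} [AddCommGroup V]
    [Module (ZMod (p ^ (k + 1))) V] [Finite V] (Q : QuadraticForm (ZMod (p ^ (k + 1))) V)
    (n : ZMod (p ^ (k + 1))) {S : V → Prop}
    (hS : ∀ x t, S (x + (p : ZMod (p ^ (k + 1))) ^ (k - v) • t) ↔ S x)
    (hpolar : ∀ x, S x → (p : ZMod _) * (Q x - n) = 0 →
      ∃ t, polar Q x t = (p : ZMod _) ^ v) :
    Nat.card {x // S x ∧ (p : ZMod _) * (Q x - n) = 0} =
      p * Nat.card {x // S x ∧ Q x = n} := by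
  refine card_eq_mul_of_card_translates_eq
    (DistribSMul.toAddMonoidHom V ((p : ZMod (p ^ (k + 1))) ^ (k - v)))
    (fun x hx => ⟨hx.1, by rw [hx.2, sub_self, mul_zero]⟩) fun x hx => ?_
  simp only [DistribSMul.toAddMonoidHom_apply, hS, hx.1, true_and]
  exact card_lift_coset hv Q n hx.2 (hpolar x hx.1 hx.2)

end Hensel

section Reduction

variable {p : ℕ} [hp : Fact p.Prime]

/-- Reduction modulo `p ^ k` of residues modulo `p ^ (k + j)`. -/
def reduction (p k j : ℕ) : ZMod (p ^ (k + j)) →+* ZMod (p ^ k) :=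
  ZMod.castHom (pow_dvd_pow p (k.le_add_right j)) _

theorem reduction_surjective (p k j : ℕ) : Function.Surjective (reduction p k j) :=
  ZMod.castHom_surjective _

theorem reduction_toZModPow (k j : ℕ) (x : ℤ_[p]) :
    reduction p k j (PadicInt.toZModPow (k + j) x) = PadicInt.toZModPow k x :=
  PadicInt.cast_toZModPow k (k + j) (k.le_add_right j) x

theorem reduction_eq_zero_iff {k j : ℕ} {y : ZMod (p ^ (k + j))} :
    reduction p k j y = 0 ↔ (p : ZMod _) ^ j * y = 0 := by
  obtain ⟨y, rfl⟩ := ZMod.natCast_zmod_surjective y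
  rw [map_natCast, ZMod.natCast_eq_zero_iff, ← Nat.cast_pow, ← Nat.cast_mul,
    ZMod.natCast_eq_zero_iff, add_comm k, pow_add, Nat.mul_dvd_mul_iff_left (pow_pos hp.out.pos j)]

theorem isUnit_reduction_iff {k : ℕ} (hk : k ≠ 0) (j : ℕ) {y : ZMod (p ^ (k + j))} :
    IsUnit (reduction p k j y) ↔ IsUnit y := by
  obtain ⟨y, rfl⟩ := ZMod.natCast_zmod_surjective y
  rw [map_natCast, ZMod.isUnit_iff_coprime, ZMod.isUnit_iff_coprime,
    Nat.coprime_pow_right_iff (by omega), Nat.coprime_pow_right_iff (by omega)]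

theorem card_preimage_reduction {ι : Type*} [Fintype ι] {k : ℕ} (j : ℕ)
    (P : (ι → ZMod (p ^ k)) → Prop) :
    Nat.card {x : ι → ZMod (p ^ (k + j)) // P (reduction p k j ∘ x)} =
      p ^ (Fintype.card ι * j) * Nat.card {y // P y} := by
  let f : (ι → ZMod (p ^ (k + j))) →+ (ι → ZMod (p ^ k)) :=
    (reduction p k j).toAddMonoidHom.compLeft ι
  have hf (y) : y ∈ f.range := (reduction_surjective p k j).comp_left y
  have hker : Nat.card f.ker = p ^ (Fintype.card ι * j) := by
    have hcard := card_preimage_eq_card_ker_mul f (P := fun _ => True) fun y _ => hf y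
    simp only [Nat.card_congr (Equiv.subtypeUnivEquiv fun _ => trivial), Nat.card_fun,
      Nat.card_zmod, Nat.card_eq_fintype_card (α := ι)] at hcard
    refine Nat.eq_of_mul_eq_mul_right (pow_pos (pow_pos hp.out.pos k) _) (hcard.symm.trans ?_)
    rw [← pow_mul, ← pow_mul, ← pow_add]
    ring
  rw [← hker]
  exact card_preimage_eq_card_ker_mul f fun y _ => hf y

end Reduction

section DiagonalForm

open QuadraticMap

variable {ι : Type*} [Fintype ι] {p : ℕ} [hp : Fact p.Prime]

/-- The diagonal form `∑ i, a i * y i ^ 2` modulo `p ^ k`. -/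
noncomputable def diagForm (a : ι → ℤ_[p]) (k : ℕ) :
    QuadraticForm (ZMod (p ^ k)) (ι → ZMod (p ^ k)) :=
  weightedSumSquares (ZMod (p ^ k)) fun i => PadicInt.toZModPow k (a i)

/-- The number of solutions of `∑ i, a i * y i ^ 2 = n` modulo `p ^ k`. -/
noncomputable def solutionCount (a : ι → ℤ_[p]) (n : ℤ_[p]) (k : ℕ) : ℕ :=
  Nat.card {y // diagForm a k y = PadicInt.toZModPow k n}

/-- The number of nonsingular solutions of `∑ i, a i * y i ^ 2 = n` modulo `p ^ k`. -/
noncomputable def nonsingularCount (a : ι → ℤ_[p]) (n : ℤ_[p]) (k : ℕ) : ℕ :=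
  Nat.card {y // IsNonsingularAt (diagForm a k) y ∧ diagForm a k y = PadicInt.toZModPow k n}

theorem diagForm_apply (a : ι → ℤ_[p]) (k : ℕ) (y : ι → ZMod (p ^ k)) :
    diagForm a k y = ∑ i, PadicInt.toZModPow k (a i) * y i ^ 2 := by
  simp only [diagForm, weightedSumSquares_apply, smul_eq_mul, pow_two]

theorem diagForm_toZModPow (a : ι → ℤ_[p]) (k : ℕ) (x : ι → ℤ_[p]) :
    diagForm a k (PadicInt.toZModPow k ∘ x) = PadicInt.toZModPow k (∑ i, a i * x i ^ 2) := by
  simp only [diagForm_apply, map_sum, map_mul, map_pow, Function.comp_apply]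

theorem reduction_diagForm (a : ι → ℤ_[p]) (k j : ℕ) (x : ι → ZMod (p ^ (k + j))) :
    reduction p k j (diagForm a (k + j) x) = diagForm a k (reduction p k j ∘ x) := by
  simp only [diagForm_apply, map_sum, map_mul, map_pow, reduction_toZModPow, Function.comp_apply]

theorem reduction_polar_diagForm (a : ι → ℤ_[p]) (k j : ℕ) (x t : ι → ZMod (p ^ (k + j))) :
    reduction p k j (polar (diagForm a (k + j)) x t) =
      polar (diagForm a k) (reduction p k j ∘ x) (reduction p k j ∘ t) := by
  have hadd : reduction p k j ∘ (x + t) = reduction p k j ∘ x + reduction p k j ∘ t :=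
    map_add ((reduction p k j).toAddMonoidHom.compLeft ι) x t
  simp only [polar, map_sub, reduction_diagForm, hadd]

theorem isNonsingularAt_reduction_iff (a : ι → ℤ_[p]) {k : ℕ} (hk : k ≠ 0) (j : ℕ)
    (x : ι → ZMod (p ^ (k + j))) :
    IsNonsingularAt (diagForm a k) (reduction p k j ∘ x) ↔
      IsNonsingularAt (diagForm a (k + j)) x := by
  refine (reduction_surjective p k j).comp_left.exists.trans (exists_congr fun t => ?_)
  rw [← isUnit_reduction_iff hk j, reduction_polar_diagForm]

theorem card_solutions_reduction (a : ι → ℤ_[p]) (n : ℤ_[p]) (k j : ℕ)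
    (S : (ι → ZMod (p ^ k)) → Prop) :
    Nat.card {x : ι → ZMod (p ^ (k + j)) // S (reduction p k j ∘ x) ∧
        (p : ZMod _) ^ j * (diagForm a (k + j) x - PadicInt.toZModPow (k + j) n) = 0} =
      p ^ (Fintype.card ι * j) *
        Nat.card {y // S y ∧ diagForm a k y = PadicInt.toZModPow k n} := by
  rw [← card_preimage_reduction]
  refine Nat.card_congr (Equiv.subtypeEquivRight fun x => and_congr_right fun _ => ?_)
  rw [← reduction_eq_zero_iff, map_sub, reduction_diagForm, reduction_toZModPow, sub_eq_zero]

end DiagonalForm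

section Lifting

open QuadraticMap

variable {ι : Type*} [Fintype ι] {p : ℕ} [hp : Fact p.Prime]

theorem nonsingularCount_succ (a : ι → ℤ_[p]) (n : ℤ_[p]) {k : ℕ} (hk : k ≠ 0) :
    p * nonsingularCount a n (k + 1) = p ^ Fintype.card ι * nonsingularCount a n k := by
  have hred := card_solutions_reduction a n k 1 (IsNonsingularAt (diagForm a k))
  simp only [pow_one, mul_one, isNonsingularAt_reduction_iff a hk] at hred
  refine Eq.trans (card_lift (k := k) (v := 0) (by omega) _ _ (fun x t => ?_) ?_).symm hred
  · have hperiodic : reduction p k 1 ∘ (x + (p : ZMod (p ^ (k + 1))) ^ k • t) =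
        reduction p k 1 ∘ x := by
      funext i
      have hpk : (p : ZMod (p ^ k)) ^ k = 0 := by rw [← Nat.cast_pow, ZMod.natCast_self]
      simp [hpk]
    rw [Nat.sub_zero, ← isNonsingularAt_reduction_iff a hk, hperiodic,
      isNonsingularAt_reduction_iff a hk]
  · rintro x ⟨t, u, hu⟩ -
    exact ⟨(↑u⁻¹ : ZMod (p ^ (k + 1))) • t, by
      rw [polar_smul_right, ← hu, smul_eq_mul, u.inv_mul, pow_zero]⟩

theorem isUnit_two_padicInt (hodd : p ≠ 2) : IsUnit (2 : ℤ_[p]) := by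
  rw [← Nat.cast_two, PadicInt.isUnit_iff, PadicInt.norm_natCast_eq_one_iff]
  exact (Nat.coprime_primes hp.out Nat.prime_two).2 hodd

theorem isUnit_two_zmod_pow (hodd : p ≠ 2) (k : ℕ) : IsUnit (2 : ZMod (p ^ k)) := by
  simpa only [map_ofNat] using (isUnit_two_padicInt hodd).map (PadicInt.toZModPow k)

/- Euler's identity `polar Q x x = 2 * Q x` shows that the differential at `x` has valuation at most
`v`. -/
theorem exists_polar_diagForm_eq_pow (hodd : p ≠ 2) (a : ι → ℤ_[p]) {n : ℤ_[p]} (hn : n ≠ 0)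
    {k : ℕ} (hk : n.valuation < k) {x : ι → ZMod (p ^ (k + 1))}
    (hx : (p : ZMod _) * (diagForm a (k + 1) x - PadicInt.toZModPow (k + 1) n) = 0) :
    ∃ t, polar (diagForm a (k + 1)) x t = (p : ZMod _) ^ n.valuation := by
  set v := n.valuation
  set u := PadicInt.toZModPow (k + 1) (PadicInt.unitCoeff hn : ℤ_[p])
  have hn' : PadicInt.toZModPow (k + 1) n = u * (p : ZMod _) ^ v := by
    conv_lhs => rw [PadicInt.unitCoeff_spec hn]
    rw [map_mul, map_pow, map_natCast]
  obtain ⟨c, hc⟩ := zmod_pow_mul_eq_zero_iff.1 (by rwa [pow_one])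
  have hpk : (p : ZMod (p ^ (k + 1))) ^ k = (p : ZMod _) ^ v * (p : ZMod _) ^ (k - v) := by
    rw [← pow_add, Nat.add_sub_cancel' hk.le]
  have hnil : IsNilpotent ((p : ZMod (p ^ (k + 1))) ^ (k - v) * c) := by
    refine (Commute.all _ _).isNilpotent_mul_right ⟨k + 1, ?_⟩
    rw [← pow_mul]
    exact pow_eq_zero_of_le (Nat.le_mul_of_pos_left _ (Nat.sub_pos_of_lt hk))
      (by rw [← Nat.cast_pow, ZMod.natCast_self])
  obtain ⟨w, hw⟩ : IsUnit (2 * (u + (p : ZMod (p ^ (k + 1))) ^ (k - v) * c)) :=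
    (isUnit_two_zmod_pow hodd _).mul
      (hnil.isUnit_add_left_of_commute ((Units.isUnit _).map _) (Commute.all _ _))
  refine ⟨(↑w⁻¹ : ZMod (p ^ (k + 1))) • x, ?_⟩
  have hself : polar (diagForm a (k + 1)) x x = w * (p : ZMod (p ^ (k + 1))) ^ v := by
    rw [polar_self, hw, sub_eq_iff_eq_add.1 hc, hn', hpk, nsmul_eq_mul]
    push_cast
    ring
  rw [polar_smul_right, hself, smul_eq_mul, w.inv_mul_cancel_left]

theorem solutionCount_succ (hodd : p ≠ 2) (a : ι → ℤ_[p]) {n : ℤ_[p]} (hn : n ≠ 0) {k : ℕ}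
    (hk : 2 * n.valuation < k) :
    p * solutionCount a n (k + 1) = p ^ Fintype.card ι * solutionCount a n k := by
  have hred := card_solutions_reduction a n k 1 fun _ => True
  have hlift := card_lift hk (diagForm a (k + 1)) (PadicInt.toZModPow (k + 1) n)
    (S := fun _ => True) (fun _ _ => Iff.rfl)
    fun x _ hx => exists_polar_diagForm_eq_pow hodd a hn (by omega) hx
  simp only [true_and, pow_one, mul_one] at hred hlift
  exact hlift.symm.trans hred

theorem nonsingularCount_le_solutionCount (a : ι → ℤ_[p]) (n : ℤ_[p]) (k : ℕ) :
    nonsingularCount a n k ≤ solutionCount a n k :=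
  Nat.card_le_card_of_injective (Subtype.map id fun _ hy => hy.2)
    (Subtype.map_injective _ Function.injective_id)

theorem solutionCount_ge_of_isNonsingularAt {a : ι → ℤ_[p]} {n : ℤ_[p]} {y : ι → ZMod (p ^ 1)}
    (hy : diagForm a 1 y = PadicInt.toZModPow 1 n) (hns : IsNonsingularAt (diagForm a 1) y)
    {k : ℕ} (hk : 1 ≤ k) :
    (p - 1) * p ^ (Fintype.card ι * k) ≤ p ^ (k + 1) * solutionCount a n k := by
  refine le_trans ?_ (Nat.mul_le_mul_left _ (nonsingularCount_le_solutionCount a n k))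
  induction k, hk using Nat.le_induction with
  | base =>
    have : Fact (p ^ 1).Prime := ⟨by rw [pow_one]; exact hp.out⟩
    have h := card_solutions_ge_of_isNonsingularAt hy hns
    simpa only [Nat.card_fun, Nat.card_zmod, pow_one, mul_one, Nat.card_eq_fintype_card (α := ι),
      nonsingularCount, and_comm] using h
  | succ k hk ih =>
    calc (p - 1) * p ^ (Fintype.card ι * (k + 1))
        = (p - 1) * p ^ (Fintype.card ι * k) * p ^ Fintype.card ι := by ring
      _ ≤ p ^ (k + 1) * nonsingularCount a n k * p ^ Fintype.card ι := Nat.mul_le_mul_right _ ih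
      _ = p ^ (k + 1) * (p * nonsingularCount a n (k + 1)) := by
        rw [nonsingularCount_succ a n (by omega)]; ring
      _ = p ^ (k + 1 + 1) * nonsingularCount a n (k + 1) := by ring

end Lifting

section Rescaling

variable {p : ℕ} [hp : Fact p.Prime]

theorem pow_dvd_of_le_valuation {x : ℤ_[p]} {m : ℕ} (hx : x ≠ 0 → m ≤ x.valuation) :
    (p : ℤ_[p]) ^ m ∣ x := by
  by_cases h0 : x = 0
  · exact h0 ▸ dvd_zero _
  · rw [PadicInt.unitCoeff_spec h0]
    exact (pow_dvd_pow _ (hx h0)).mul_left _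

/- Here `f` is the least valuation of a term `a i * x i ^ 2`, and `(f - v(a i) + 1) / 2` is
`(f - v(a i)) / 2` rounded up, the power of `p` that then has to divide `x i`. -/
theorem exists_rescale {ι : Type*} [Finite ι] {a x : ι → ℤ_[p]} (ha : ∀ i, a i ≠ 0) (hx : x ≠ 0) :
    ∃ (f : ℕ) (b z : ι → ℤ_[p]),
      (∀ i, (p : ℤ_[p]) ^ (2 * ((f - (a i).valuation + 1) / 2)) * a i = (p : ℤ_[p]) ^ f * b i) ∧
      (∀ i, x i = (p : ℤ_[p]) ^ ((f - (a i).valuation + 1) / 2) * z i) ∧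
      (∃ i, IsUnit (b i) ∧ IsUnit (z i)) ∧
      ∀ i, x i ≠ 0 → f ≤ (a i).valuation + 2 * (x i).valuation := by
  obtain ⟨j, hj, hmin⟩ := Set.exists_min_image {i | x i ≠ 0}
    (fun i => (a i).valuation + 2 * (x i).valuation) (Set.toFinite _) (Function.ne_iff.1 hx)
  set f := (a j).valuation + 2 * (x j).valuation with hf
  have hb (i : ι) : (p : ℤ_[p]) ^ f ∣
      (p : ℤ_[p]) ^ (2 * ((f - (a i).valuation + 1) / 2)) * a i :=
    (pow_dvd_pow _ (by omega : f ≤ 2 * ((f - (a i).valuation + 1) / 2) + (a i).valuation)).trans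
      (pow_add (p : ℤ_[p]) _ _ ▸
        mul_dvd_mul_left _ (pow_dvd_of_le_valuation fun _ => le_rfl))
  have hz (i : ι) : (p : ℤ_[p]) ^ ((f - (a i).valuation + 1) / 2) ∣ x i :=
    pow_dvd_of_le_valuation fun hi => by
      have := hmin i hi
      omega
  choose b hb using hb
  choose z hz using hz
  have hc : (f - (a j).valuation + 1) / 2 = (x j).valuation := by omega
  have hp0 (m : ℕ) : (p : ℤ_[p]) ^ m ≠ 0 := pow_ne_zero _ PadicInt.prime_p.ne_zero
  refine ⟨f, b, z, hb, hz, ⟨j, ?_, ?_⟩, hmin⟩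
  · suffices b j = PadicInt.unitCoeff (ha j) from this ▸ Units.isUnit _
    refine mul_left_cancel₀ (hp0 f) ((hb j).symm.trans ?_)
    rw [hc, hf, pow_add]
    linear_combination (p : ℤ_[p]) ^ (2 * (x j).valuation) * PadicInt.unitCoeff_spec (ha j)
  · suffices z j = PadicInt.unitCoeff hj from this ▸ Units.isUnit _
    refine mul_left_cancel₀ (hp0 (x j).valuation) ?_
    rw [← hc, ← hz j, hc]
    linear_combination PadicInt.unitCoeff_spec hj

end Rescaling

section LowerBound

open QuadraticMap

variable {ι : Type*} [Fintype ι] {p : ℕ} [hp : Fact p.Prime]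

theorem card_pow_mul_eq_le (c K : ℕ) (w : ZMod (p ^ K)) :
    Nat.card {y : ZMod (p ^ K) // (p : ZMod _) ^ c * y = w} ≤ p ^ c := by
  refine (card_fiber_le_card_ker (AddMonoidHom.mulLeft ((p : ZMod (p ^ K)) ^ c)) w).trans ?_
  have hker :
      Nat.card (AddMonoidHom.mulLeft ((p : ZMod (p ^ K)) ^ c)).ker = (p ^ K).gcd (p ^ c) := by
    rw [← card_zmod_mul_eq_zero, Nat.cast_pow]
    rfl
  exact hker.trans_le (Nat.gcd_le_right _ (pow_pos hp.out.pos c))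

theorem card_pow_mul_fiber_le (c : ι → ℕ) (K : ℕ) (w : ι → ZMod (p ^ K)) :
    Nat.card {z : ι → ZMod (p ^ K) // (fun i => (p : ZMod _) ^ c i * z i) = w} ≤
      p ^ ∑ i, c i := by
  let e : {z : ι → ZMod (p ^ K) // (fun i => (p : ZMod _) ^ c i * z i) = w} ≃
      ∀ i, {y : ZMod (p ^ K) // (p : ZMod _) ^ c i * y = w i} :=
    (Equiv.subtypeEquivRight fun _ => funext_iff).trans
      (Equiv.subtypePiEquivPi (p := fun i y => (p : ZMod (p ^ K)) ^ c i * y = w i))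
  rw [Nat.card_congr e, Nat.card_pi, ← Finset.prod_pow_eq_pow_sum]
  exact Finset.prod_le_prod' fun i _ => card_pow_mul_eq_le (c i) K (w i)

/- The substitution `y i = p ^ c i * z i` turns the form `a` into `p ^ f` times the form `b`. -/
theorem solutionCount_le_of_rescale {a b : ι → ℤ_[p]} {c : ι → ℕ} {f : ℕ}
    (hab : ∀ i, (p : ℤ_[p]) ^ (2 * c i) * a i = (p : ℤ_[p]) ^ f * b i) (m : ℤ_[p]) (k : ℕ) :
    p ^ (Fintype.card ι * f) * solutionCount b m k ≤
      p ^ (∑ i, c i) * solutionCount a ((p : ℤ_[p]) ^ f * m) (k + f) := by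
  have hred := card_solutions_reduction b m k f fun _ => True
  simp only [true_and] at hred
  rw [solutionCount, ← hred]
  have hscale (z : ι → ZMod (p ^ (k + f))) :
      diagForm a (k + f) (fun i => (p : ZMod _) ^ c i * z i) =
        (p : ZMod _) ^ f * diagForm b (k + f) z := by
    simp only [diagForm_apply, Finset.mul_sum]
    refine Finset.sum_congr rfl fun i _ => ?_
    have h := congrArg (PadicInt.toZModPow (k + f)) (hab i)
    simp only [map_mul, map_pow, map_natCast] at h
    linear_combination z i ^ 2 * h
  refine card_le_mul_of_card_fiber_le
    (Subtype.map (fun z i => (p : ZMod (p ^ (k + f))) ^ c i * z i) fun z hz => ?_) fun w => ?_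
  · rw [hscale, map_mul, map_pow, map_natCast]
    linear_combination hz
  · refine le_trans ?_ (card_pow_mul_fiber_le c (k + f) w.1)
    exact Nat.card_le_card_of_injective (fun z => ⟨z.1.1, congrArg Subtype.val z.2⟩)
      fun z z' h => Subtype.ext (Subtype.ext (congrArg Subtype.val h :))

theorem isNonsingularAt_diagForm (hodd : p ≠ 2) {a : ι → ℤ_[p]} {k : ℕ} {y : ι → ZMod (p ^ k)}
    {i : ι} (ha : IsUnit (a i)) (hy : IsUnit (y i)) : IsNonsingularAt (diagForm a k) y := by
  classical
  refine ⟨Pi.single i 1, ?_⟩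
  have hpolar : polar (diagForm a k) y (Pi.single i 1) =
      2 * (PadicInt.toZModPow k (a i) * y i) := by
    simp only [polar, diagForm_apply, ← Finset.sum_sub_distrib]
    rw [Finset.sum_eq_single i (fun j _ hj => by simp [hj]) (by simp)]
    simp only [Pi.add_apply, Pi.single_eq_same]
    ring
  rw [hpolar]
  exact (isUnit_two_zmod_pow hodd k).mul ((ha.map _).mul hy)

theorem exists_solutionCount_ge (hodd : p ≠ 2) {a x : ι → ℤ_[p]} (ha : ∀ i, a i ≠ 0)
    (hx : x ≠ 0) :
    ∃ f : ℕ, (∀ i, x i ≠ 0 → f ≤ (a i).valuation + 2 * (x i).valuation) ∧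
      (p : ℤ_[p]) ^ f ∣ ∑ i, a i * x i ^ 2 ∧
      ∀ k, 1 ≤ k → (p - 1) * p ^ (Fintype.card ι * (k + f)) ≤
        p ^ (∑ i, (f - (a i).valuation + 1) / 2 + (k + 1)) *
          solutionCount a (∑ i, a i * x i ^ 2) (k + f) := by
  obtain ⟨f, b, z, hb, hz, ⟨j, hbj, hzj⟩, hf⟩ := exists_rescale ha hx
  have hn : ∑ i, a i * x i ^ 2 = (p : ℤ_[p]) ^ f * ∑ i, b i * z i ^ 2 := by
    rw [Finset.mul_sum]
    refine Finset.sum_congr rfl fun i _ => ?_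
    linear_combination z i ^ 2 * hb i +
      a i * (x i + (p : ℤ_[p]) ^ ((f - (a i).valuation + 1) / 2) * z i) * hz i
  refine ⟨f, hf, hn ▸ dvd_mul_right _ _, fun k hk => ?_⟩
  have hbound := solutionCount_ge_of_isNonsingularAt (diagForm_toZModPow b 1 z)
    (isNonsingularAt_diagForm hodd hbj (hzj.map _)) hk
  calc (p - 1) * p ^ (Fintype.card ι * (k + f))
      = (p - 1) * p ^ (Fintype.card ι * k) * p ^ (Fintype.card ι * f) := by ring
    _ ≤ p ^ (k + 1) * solutionCount b (∑ i, b i * z i ^ 2) k * p ^ (Fintype.card ι * f) :=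
        Nat.mul_le_mul_right _ hbound
    _ = p ^ (k + 1) *
          (p ^ (Fintype.card ι * f) * solutionCount b (∑ i, b i * z i ^ 2) k) := by ring
    _ ≤ p ^ (k + 1) * (p ^ (∑ i, (f - (a i).valuation + 1) / 2) *
          solutionCount a ((p : ℤ_[p]) ^ f * ∑ i, b i * z i ^ 2) (k + f)) :=
        Nat.mul_le_mul_left _ (solutionCount_le_of_rescale hb _ k)
    _ = p ^ (∑ i, (f - (a i).valuation + 1) / 2 + (k + 1)) *
          solutionCount a (∑ i, a i * x i ^ 2) (k + f) := by rw [hn]; ring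

end LowerBound

section Quaternary

open QuadraticMap Polynomial

variable {p : ℕ} [hp : Fact p.Prime]

theorem exists_ternary_zero {F : Type*} [Field F] [Finite F] (hF : ringChar F ≠ 2) {α β γ : F}
    (hα : α ≠ 0) (hβ : β ≠ 0) : ∃ s t : F, α * s ^ 2 + β * t ^ 2 + γ = 0 := by
  have := Fintype.ofFinite F
  obtain ⟨s, t, hst⟩ := FiniteField.exists_root_sum_quadratic
    (f := C α * X ^ 2) (g := C β * X ^ 2 + C γ) (degree_C_mul_X_pow 2 hα)
    ((degree_add_C (by rw [degree_C_mul_X_pow 2 hβ]; norm_num)).trans (degree_C_mul_X_pow 2 hβ))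
    (FiniteField.odd_card_of_char_ne_two hF)
  exact ⟨s, t, by simpa [add_assoc] using hst⟩

theorem exists_nonsingular_zero_of_three_units (hodd : p ≠ 2) {ι : Type*} [Fintype ι]
    {a : ι → ℤ_[p]} {i j l : ι} (hij : i ≠ j) (hil : i ≠ l) (hjl : j ≠ l) (hi : IsUnit (a i))
    (hj : IsUnit (a j)) (hl : IsUnit (a l)) :
    ∃ y, diagForm a 1 y = 0 ∧ IsNonsingularAt (diagForm a 1) y := by
  classical
  have : Fact (p ^ 1).Prime := ⟨by rw [pow_one]; exact hp.out⟩
  obtain ⟨s, t, hst⟩ := exists_ternary_zero (γ := PadicInt.toZModPow 1 (a l))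
    (by rwa [ZMod.ringChar_zmod_n, pow_one]) (hi.map (PadicInt.toZModPow 1)).ne_zero
    (hj.map (PadicInt.toZModPow 1)).ne_zero
  let y : ι → ZMod (p ^ 1) := Pi.single i s + Pi.single j t + Pi.single l 1
  have hyl : y l = 1 := by simp [y, hil.symm, hjl.symm]
  refine ⟨y, ?_, isNonsingularAt_diagForm hodd hl (hyl ▸ isUnit_one)⟩
  rw [diagForm_apply, ← Finset.sum_subset (Finset.subset_univ {i, j, l}) fun m _ hm => ?_,
    Finset.sum_insert (by simp [hij, hil]), Finset.sum_pair hjl, ← hst]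
  · simp [y, hij, hil, hjl, hij.symm, hil.symm, hjl.symm, add_assoc]
  · simp only [Finset.mem_insert, Finset.mem_singleton, not_or] at hm
    simp [y, hm]

/- The exponent lost by rescaling on the left, and the exponent `f + ⌊ord_p(D) / 2⌋` allowed by the
density bound on the right. -/
theorem sum_half_sub_le {e : Fin 4 → ℕ} {f : ℕ} {i₀ i₁ : Fin 4} (hf : f ≤ e i₀) (h₁ : e i₁ = 0)
    (hthree : ∀ i j l, i ≠ j → i ≠ l → j ≠ l → e i = 0 → e j = 0 → e l ≠ 0) :
    ∑ i, (f - e i + 1) / 2 ≤ f + (∑ i, e i) / 2 := by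
  have h012 := hthree (i₀.succAbove 0) (i₀.succAbove 1) (i₀.succAbove 2)
    (by simp) (by simp) (by simp)
  simp only [Fin.sum_univ_succAbove _ i₀, Fin.sum_univ_three]
  obtain ⟨m, hm⟩ := Nat.even_or_odd' f
  obtain rfl | ⟨j, rfl⟩ := Fin.eq_self_or_eq_succAbove i₀ i₁
  · omega
  · fin_cases j <;> simp only [Fin.mk_one, Fin.zero_eta, Fin.reduceFinMk] at h₁ <;> omega

theorem isUnit_iff_valuation_eq_zero {x : ℤ_[p]} (hx : x ≠ 0) : IsUnit x ↔ x.valuation = 0 := by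
  have hp1 : (p : ℝ) ≠ 1 := by exact_mod_cast hp.out.ne_one
  rw [PadicInt.isUnit_iff, PadicInt.norm_eq_zpow_neg_valuation hx,
    zpow_eq_one_iff_right₀ (Nat.cast_nonneg p) hp1, neg_eq_zero, Nat.cast_eq_zero]

theorem eventually_solutionCount_ge (hodd : p ≠ 2) {a x : Fin 4 → ℤ_[p]} (ha : ∀ i, a i ≠ 0)
    {i₁ : Fin 4} (h₁ : IsUnit (a i₁)) {i₀ : Fin 4} (hx : IsUnit (x i₀)) :
    ∀ᶠ k in Filter.atTop, (p - 1) * p ^ (4 * k) ≤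
      p ^ ((∑ i, (a i).valuation) / 2 + (k + 1)) * solutionCount a (∑ i, a i * x i ^ 2) k := by
  obtain ⟨f, hf, hdvd, hbound⟩ :=
    exists_solutionCount_ge hodd ha fun h0 => hx.ne_zero (congrFun h0 i₀)
  by_cases hsum : ∑ i, (f - (a i).valuation + 1) / 2 ≤ f + (∑ i, (a i).valuation) / 2
  · filter_upwards [Filter.eventually_ge_atTop (f + 1)] with K hK
    obtain ⟨k, rfl⟩ := Nat.exists_eq_add_of_le' (Nat.le_of_succ_le hK)
    refine (hbound k (by omega)).trans (Nat.mul_le_mul_right _ (Nat.pow_le_pow_right hp.out.pos ?_))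
    omega
  -- Otherwise three coefficients are units and `p` divides the represented value.
  · have hf₀ : f ≤ (a i₀).valuation := by
      simpa [(isUnit_iff_valuation_eq_zero hx.ne_zero).1 hx] using hf i₀ hx.ne_zero
    obtain ⟨i, j, l, hij, hil, hjl, hi, hj, hl⟩ : ∃ i j l, i ≠ j ∧ i ≠ l ∧ j ≠ l ∧
        (a i).valuation = 0 ∧ (a j).valuation = 0 ∧ (a l).valuation = 0 := by
      by_contra! hthree
      exact hsum (sum_half_sub_le hf₀ ((isUnit_iff_valuation_eq_zero (ha i₁)).1 h₁) hthree)
    obtain ⟨y, hy, hns⟩ := exists_nonsingular_zero_of_three_units hodd hij hil hjl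
      ((isUnit_iff_valuation_eq_zero (ha i)).2 hi) ((isUnit_iff_valuation_eq_zero (ha j)).2 hj)
      ((isUnit_iff_valuation_eq_zero (ha l)).2 hl)
    have hf_pos : f ≠ 0 := by
      rintro rfl
      simp at hsum
    have hn : PadicInt.toZModPow 1 (∑ i, a i * x i ^ 2) = 0 := by
      rw [← RingHom.mem_ker, PadicInt.ker_toZModPow, Ideal.mem_span_singleton]
      exact (pow_dvd_pow _ (Nat.one_le_iff_ne_zero.2 hf_pos)).trans hdvd
    filter_upwards [Filter.eventually_ge_atTop 1] with k hk
    refine (solutionCount_ge_of_isNonsingularAt (hy.trans hn.symm) hns hk).trans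
      (Nat.mul_le_mul_right _ (Nat.pow_le_pow_right hp.out.pos ?_))
    omega

end Quaternary

section Density

variable {p : ℕ} [hp : Fact p.Prime]

theorem exists_tendsto_solutionCount_div (hodd : p ≠ 2) {ι : Type*} [Fintype ι] (a : ι → ℤ_[p])
    {n : ℤ_[p]} (hn : n ≠ 0) :
    ∃ β : ℝ, Filter.Tendsto
      (fun k => p ^ k * solutionCount a n k / (p : ℝ) ^ (Fintype.card ι * k)) Filter.atTop
      (nhds β) := by
  have hp0 : (p : ℝ) ≠ 0 := Nat.cast_ne_zero.2 hp.out.ne_zero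
  let s : ℕ → ℝ := fun k => p ^ k * solutionCount a n k / (p : ℝ) ^ (Fintype.card ι * k)
  refine ⟨s (2 * n.valuation + 1),
    tendsto_atTop_of_eventually_const (i₀ := 2 * n.valuation + 1) fun k hk => ?_⟩
  induction k, hk using Nat.le_induction with
  | base => rfl
  | succ k hk ih =>
    rw [← ih]
    have hsucc : (p : ℝ) * solutionCount a n (k + 1) =
        p ^ Fintype.card ι * solutionCount a n k := by
      exact_mod_cast solutionCount_succ hodd a hn (Nat.lt_of_succ_le hk)
    rw [div_eq_div_iff (pow_ne_zero _ hp0) (pow_ne_zero _ hp0)]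
    linear_combination p ^ k * (p : ℝ) ^ (Fintype.card ι * k) * hsucc

theorem exists_tendsto_and_rpow_le (hodd : p ≠ 2) {a x : Fin 4 → ℤ_[p]} (ha : ∀ i, a i ≠ 0)
    {i₁ : Fin 4} (h₁ : IsUnit (a i₁)) {i₀ : Fin 4} (hx : IsUnit (x i₀))
    (hn : ∑ i, a i * x i ^ 2 ≠ 0) :
    ∃ β : ℝ, Filter.Tendsto
      (fun k => (solutionCount a (∑ i, a i * x i ^ 2) k : ℝ) / (p : ℝ) ^ (3 * k)) Filter.atTop
      (nhds β) ∧
      (p : ℝ) ^ (-(((∑ i, (a i).valuation) / 2 : ℕ) : ℝ)) * (1 - 1 / (p : ℝ)) ≤ β := by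
  have hp0 : (0 : ℝ) < p := Nat.cast_pos.2 hp.out.pos
  obtain ⟨β, hβ⟩ := exists_tendsto_solutionCount_div hodd a hn
  have hβ' := hβ.congr fun k => show _ =
      (solutionCount a (∑ i, a i * x i ^ 2) k : ℝ) / (p : ℝ) ^ (3 * k) by
    rw [Fintype.card_fin, show 4 * k = k + 3 * k by ring, pow_add,
      mul_div_mul_left _ _ (pow_pos hp0 k).ne']
  refine ⟨β, hβ', ge_of_tendsto hβ' ?_⟩
  filter_upwards [eventually_solutionCount_ge hodd ha h₁ hx] with k hk
  have hk' : ((p : ℝ) - 1) * p ^ (4 * k) ≤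
      p ^ ((∑ i, (a i).valuation) / 2 + (k + 1)) * solutionCount a (∑ i, a i * x i ^ 2) k := by
    rw [← Nat.cast_pred hp.out.pos]
    exact_mod_cast hk
  rw [Real.rpow_neg hp0.le, Real.rpow_natCast, le_div_iff₀ (pow_pos hp0 _)]
  refine le_of_mul_le_mul_left (Eq.trans_le ?_ hk')
    (pow_pos hp0 ((∑ i, (a i).valuation) / 2 + (k + 1)))
  field_simp
  ring

end Density

section Diagonalization

variable {R : Type*} [CommRing R] [IsDomain R] [IsPrincipalIdealRing R] [IsLocalRing R]

theorem exists_self_ne_zero_dvd {M : Type*} [AddCommGroup M] [Module R M]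
    {B : LinearMap.BilinForm R M} (h : ∃ v, B v v ≠ 0) :
    ∃ v, B v v ≠ 0 ∧ ∀ w, B v v ∣ B w w := by
  obtain ⟨_, ⟨⟨v, rfl⟩, hv⟩, hmin⟩ := wellFounded_dvdNotUnit.has_min
    {c : R | (∃ v, B v v = c) ∧ c ≠ 0} (h.imp' (fun v => B v v) fun v hv => ⟨⟨v, rfl⟩, hv⟩)
  refine ⟨v, hv, fun w => ?_⟩
  obtain hvw | hwv := ValuationRing.dvd_total (B v v) (B w w)
  · exact hvw
  · by_contra hvw
    exact hmin _ ⟨⟨w, rfl⟩, fun h0 => hvw (h0.symm ▸ dvd_zero _)⟩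
      (dvdNotUnit_of_dvd_of_not_dvd hwv hvw)

theorem dvd_of_forall_dvd_self {R M : Type*} [CommRing R] (h2 : IsUnit (2 : R))
    [AddCommGroup M] [Module R M] {B : LinearMap.BilinForm R M} (hB : B.IsSymm) {d : R}
    (hd : ∀ w, d ∣ B w w) (x y : M) : d ∣ B x y := by
  have hpolar : 2 * B x y = B (x + y) (x + y) - B x x - B y y := by
    simp only [map_add, LinearMap.add_apply, hB.eq y x]
    ring
  rw [← h2.dvd_mul_left, hpolar]
  exact ((hd _).sub (hd _)).sub (hd _)

theorem exists_basis_isOrthoᵢ (h2 : IsUnit (2 : R)) {n : ℕ} {M : Type*} [AddCommGroup M]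
    [Module R M] [Module.Free R M] [Module.Finite R M] {B : LinearMap.BilinForm R M}
    (hB : B.IsSymm) (hn : Module.finrank R M = n) :
    ∃ b : Module.Basis (Fin n) R M, B.IsOrthoᵢ b := by
  induction n generalizing M with
  | zero => exact ⟨Module.finBasisOfFinrankEq R M hn, fun i => i.elim0⟩
  | succ n ih =>
    by_cases h : ∃ v, B v v ≠ 0
    · obtain ⟨v, hv, hdvd⟩ := exists_self_ne_zero_dvd h
      let N : Submodule R M := LinearMap.ker (B v)
      have hli (c : R) (x : M) (hx : x ∈ N) (h0 : c • v + x = 0) : c = 0 := by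
        simpa [LinearMap.mem_ker.1 hx, hv] using congrArg (B v) h0
      have hsp (z : M) : ∃ c : R, z + c • v ∈ N := by
        obtain ⟨c, hc⟩ := dvd_of_forall_dvd_self h2 hB hdvd v z
        refine ⟨-c, LinearMap.mem_ker.2 ?_⟩
        rw [map_add, map_smul, hc, smul_eq_mul]
        ring
      have hN : Module.finrank R N = n := by
        have := Module.finrank_eq_card_basis
          (Module.Basis.mkFinCons v (Module.finBasis R N) hli hsp)
        rw [hn, Fintype.card_fin] at this
        omega
      obtain ⟨b, hb⟩ := ih (hB.restrict N) hN
      refine ⟨Module.Basis.mkFinCons v b hli hsp, LinearMap.isOrthoᵢ_def.2 fun i j hij => ?_⟩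
      rw [Module.Basis.coe_mkFinCons]
      cases i using Fin.cases <;> cases j using Fin.cases <;>
        simp only [Fin.cons_zero, Fin.cons_succ, Function.comp_apply]
      · exact absurd rfl hij
      · exact (b _).2
      · exact (hB.eq _ _).trans (b _).2
      · exact hb (ne_of_apply_ne Fin.succ hij)
    · push Not at h
      refine ⟨Module.finBasisOfFinrankEq R M hn, LinearMap.isOrthoᵢ_def.2 fun i j _ => ?_⟩
      exact zero_dvd_iff.1 (dvd_of_forall_dvd_self h2 hB (fun w => (h w).symm ▸ dvd_rfl) _ _)

theorem exists_transpose_mul_mul_eq_diagonal (h2 : IsUnit (2 : R)) {n : ℕ}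
    {A : Matrix (Fin n) (Fin n) R} (hA : A.IsSymm) :
    ∃ (P : Matrix (Fin n) (Fin n) R) (a : Fin n → R),
      IsUnit P ∧ P.transpose * A * P = Matrix.diagonal a := by
  obtain ⟨b, hb⟩ := exists_basis_isOrthoᵢ h2 (Matrix.isSymm_toBilin'_iff_isSymm.2 hA)
    (Module.finrank_fin_fun R)
  refine ⟨(Pi.basisFun R (Fin n)).toMatrix b, fun i => Matrix.toBilin' A (b i) (b i), ?_, ?_⟩
  · have := (Pi.basisFun R (Fin n)).invertibleToMatrix b
    exact isUnit_of_invertible _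
  · have hmul := LinearMap.BilinForm.toMatrix_mul_basis_toMatrix (Pi.basisFun R (Fin n)) b
      (Matrix.toBilin' A)
    rw [LinearMap.BilinForm.toMatrix_basisFun, LinearMap.BilinForm.toMatrix'_toBilin'] at hmul
    rw [hmul]
    ext i j
    rw [LinearMap.BilinForm.toMatrix_apply, Matrix.diagonal_apply]
    split_ifs with hij
    · rw [hij]
    · exact LinearMap.isOrthoᵢ_def.1 hb i j hij

end Diagonalization

section GramMatrix

open Matrix

variable {p : ℕ} [hp : Fact p.Prime]

theorem dotProduct_mulVec_of_congruent_diagonal {ι R : Type*} [Fintype ι] [DecidableEq ι]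
    [CommRing R] {A P : Matrix ι ι R} {a : ι → R} (hD : Pᵀ * A * P = diagonal a) (y : ι → R) :
    P *ᵥ y ⬝ᵥ A *ᵥ (P *ᵥ y) = ∑ i, a i * y i ^ 2 := by
  calc P *ᵥ y ⬝ᵥ A *ᵥ (P *ᵥ y) = y ⬝ᵥ diagonal a *ᵥ y := by
        rw [← hD, ← mulVec_mulVec, ← mulVec_mulVec, dotProduct_mulVec y, vecMul_transpose]
    _ = ∑ i, a i * y i ^ 2 := by
        simp only [dotProduct, mulVec_diagonal]
        exact Finset.sum_congr rfl fun i _ => by ring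

theorem dvd_apply_of_congruent_diagonal {ι R : Type*} [Fintype ι] [DecidableEq ι] [CommRing R]
    {A P : Matrix ι ι R} {a : ι → R} (hP : IsUnit P) (hD : Pᵀ * A * P = diagonal a) {d : R}
    (hd : ∀ i, d ∣ a i) (i j : ι) : d ∣ A i j := by
  have hdet := (isUnit_iff_isUnit_det P).1 hP
  have hA : A = (P⁻¹)ᵀ * diagonal a * P⁻¹ := by
    rw [← hD, transpose_nonsing_inv, Matrix.mul_assoc Pᵀ,
      nonsing_inv_mul_cancel_left _ _ (isUnit_det_transpose P hdet),
      mul_nonsing_inv_cancel_right _ _ hdet]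
  rw [hA, mul_apply]
  refine Finset.dvd_sum fun k _ => ?_
  rw [mul_diagonal]
  exact ((hd k).mul_left _).mul_right _

theorem IsGram.two_mul_qval {R : Type*} [CommRing R] {A : Matrix (Fin 4) (Fin 4) ℤ}
    (hA : IsGram A) (x : Fin 4 → R) : 2 * Qval A x = x ⬝ᵥ A.map Int.cast *ᵥ x := by
  have hdiag (i) : ((A i i : ℤ) : R) = 2 * ((A i i / 2 : ℤ) : R) := by
    rw [← Int.cast_two, ← Int.cast_mul, Int.mul_ediv_cancel' (hA.2 i)]
  simp only [Qval, mulVec, dotProduct, map_apply, ← Finset.filter_lt_eq_Ioi, Finset.sum_filter,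
    Fin.sum_univ_four, hdiag, hA.1.apply 0 1, hA.1.apply 0 2, hA.1.apply 0 3, hA.1.apply 1 2,
    hA.1.apply 1 3, hA.1.apply 2 3]
  simp only [lt_self_iff_false, zero_lt_one, not_lt_zero, Fin.lt_one_iff, Fin.reduceLT,
    Fin.reduceEq, if_true, if_false]
  ring

theorem IsGram.two_mul_qval_mulVec {R : Type*} [CommRing R] {A : Matrix (Fin 4) (Fin 4) ℤ}
    (hA : IsGram A) {P : Matrix (Fin 4) (Fin 4) R} {a : Fin 4 → R}
    (hD : Pᵀ * A.map Int.cast * P = diagonal a) (y : Fin 4 → R) :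
    2 * Qval A (P *ᵥ y) = ∑ i, a i * y i ^ 2 :=
  (hA.two_mul_qval _).trans (dotProduct_mulVec_of_congruent_diagonal hD y)

theorem IsGram.localCount_eq_solutionCount {A : Matrix (Fin 4) (Fin 4) ℤ} (hA : IsGram A)
    (hodd : p ≠ 2) {P : Matrix (Fin 4) (Fin 4) ℤ_[p]} {a : Fin 4 → ℤ_[p]} (hP : IsUnit P)
    (hD : Pᵀ * A.map Int.cast * P = diagonal a) (n k : ℕ) :
    localCount A p n k = solutionCount a (2 * n) k := by
  let φ := PadicInt.toZModPow (p := p) k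
  have hDk : (P.map φ)ᵀ * A.map Int.cast * P.map φ = diagonal fun i => φ (a i) := by
    have h := congrArg (fun M => M.map φ) hD
    have hA' : (A.map (Int.cast : ℤ → ℤ_[p])).map φ = A.map Int.cast := by
      ext i j
      exact map_intCast φ (A i j)
    simpa only [Matrix.map_mul, diagonal_map (map_zero φ), transpose_map, hA'] using h
  have hPk : IsUnit (P.map φ) := hP.map φ.mapMatrix
  let e : (Fin 4 → ZMod (p ^ k)) ≃ (Fin 4 → ZMod (p ^ k)) :=
    Equiv.ofBijective _ ⟨mulVec_injective_of_isUnit hPk, mulVec_surjective_iff_isUnit.2 hPk⟩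
  refine (Nat.card_congr (e.subtypeEquiv fun y => ?_)).symm
  rw [diagForm_apply, ← hA.two_mul_qval_mulVec hDk, map_mul, map_natCast, map_ofNat,
    (isUnit_two_zmod_pow hodd k).mul_right_inj]
  rfl

theorem valuation_intCast (d : ℤ) : (d : ℤ_[p]).valuation = d.natAbs.factorization p := by
  have h : (((d : ℤ_[p]).valuation : ℕ) : ℤ) = padicValInt p d := by
    rw [← PadicInt.valuation_coe, PadicInt.coe_intCast, Padic.valuation_intCast]
  rw [Nat.cast_inj.1 h, padicValInt, Nat.factorization_def _ hp.out]

theorem valuation_prod {ι : Type*} (s : Finset ι) {a : ι → ℤ_[p]} (ha : ∀ i ∈ s, a i ≠ 0) :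
    (∏ i ∈ s, a i).valuation = ∑ i ∈ s, (a i).valuation := by
  induction s using Finset.cons_induction with
  | empty => simp
  | cons i s hi ih =>
    rw [Finset.forall_mem_cons] at ha
    rw [Finset.prod_cons, Finset.sum_cons,
      PadicInt.valuation_mul ha.1 (Finset.prod_ne_zero_iff.2 ha.2), ih ha.2]

theorem ne_zero_and_sum_valuation_of_congruent_diagonal {ι : Type*} [Fintype ι] [DecidableEq ι]
    {A : Matrix ι ι ℤ} (hdet : A.det ≠ 0) {P : Matrix ι ι ℤ_[p]} {a : ι → ℤ_[p]}
    (hP : IsUnit P) (hD : Pᵀ * A.map Int.cast * P = diagonal a) :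
    (∀ i, a i ≠ 0) ∧ ∑ i, (a i).valuation = A.det.natAbs.factorization p := by
  have hPdet := (isUnit_iff_isUnit_det P).1 hP
  have hprod : ∏ i, a i = P.det * (A.det : ℤ_[p]) * P.det := by
    rw [← det_diagonal, ← hD, det_mul, det_mul, det_transpose, Int.cast_det]
  have hdet' : (A.det : ℤ_[p]) ≠ 0 := Int.cast_ne_zero.2 hdet
  have hPA := mul_ne_zero hPdet.ne_zero hdet'
  have ha : ∀ i ∈ Finset.univ, a i ≠ 0 :=
    Finset.prod_ne_zero_iff.1 (hprod ▸ mul_ne_zero hPA hPdet.ne_zero)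
  refine ⟨fun i => ha i (Finset.mem_univ i), ?_⟩
  rw [← valuation_prod _ ha, hprod, PadicInt.valuation_mul hPA hPdet.ne_zero,
    PadicInt.valuation_mul hPdet.ne_zero hdet',
    (isUnit_iff_valuation_eq_zero hPdet.ne_zero).1 hPdet, valuation_intCast, zero_add, add_zero]

theorem not_isUnit_iff_dvd {x : ℤ_[p]} : ¬ IsUnit x ↔ (p : ℤ_[p]) ∣ x :=
  PadicInt.not_isUnit_iff.trans (PadicInt.norm_lt_one_iff_dvd x)

theorem IsPrimitiveQF.exists_isUnit {A : Matrix (Fin 4) (Fin 4) ℤ} (hprim : IsPrimitiveQF A)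
    (hA : IsGram A) (hodd : p ≠ 2) {P : Matrix (Fin 4) (Fin 4) ℤ_[p]} {a : Fin 4 → ℤ_[p]}
    (hP : IsUnit P) (hD : Pᵀ * A.map Int.cast * P = diagonal a) : ∃ i, IsUnit (a i) := by
  by_contra! ha
  have hdvd (i j) : (p : ℤ) ∣ A i j := by
    have h := dvd_apply_of_congruent_diagonal hP hD (fun k => not_isUnit_iff_dvd.1 (ha k)) i j
    simpa using (PadicInt.pow_p_dvd_int_iff 1 (A i j)).1 (by simpa using h)
  have hcoprime : IsCoprime (p : ℤ) 2 :=
    Nat.isCoprime_iff_coprime.2 ((Nat.coprime_primes hp.out Nat.prime_two).2 hodd)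
  have hhalf (i) : (p : ℤ) ∣ A i i / 2 := by
    refine hcoprime.dvd_of_dvd_mul_left ?_
    rw [Int.mul_ediv_cancel' (hA.2 i)]
    exact hdvd i i
  exact (Nat.prime_iff_prime_int.1 hp.out).not_isUnit (hprim p hhalf fun i j _ => hdvd i j)

theorem exists_isUnit_of_not_forall_dvd_mulVec {m ι : Type*} [Fintype ι] {P : Matrix m ι ℤ_[p]}
    {y : ι → ℤ_[p]} (h : ¬ ∀ i, (p : ℤ_[p]) ∣ (P *ᵥ y) i) : ∃ i, IsUnit (y i) := by
  by_contra! hy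
  exact h fun i => Finset.dvd_sum fun j _ => (not_isUnit_iff_dvd.1 (hy j)).mul_left _

theorem PosDefQF.det_ne_zero {A : Matrix (Fin 4) (Fin 4) ℤ} (hA : PosDefQF A) : A.det ≠ 0 := by
  have h := hA.det_pos
  rw [← Int.cast_det, Int.cast_pos] at h
  exact h.ne'

end GramMatrix

theorem local_density_primitive_odd_general
    (A : Matrix (Fin 4) (Fin 4) ℤ) (p n : ℕ) [Fact p.Prime]
    (hA : IsGram A) (hprim : IsPrimitiveQF A) (hdet : A.det ≠ 0)
    (hodd : p ≠ 2) (hn : 0 < n)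
    (h : ∃ x : Fin 4 → ℤ_[p], Qval A x = (n : ℤ_[p]) ∧ ¬ ∀ i, (p : ℤ_[p]) ∣ x i) :
    DensityBound A p n
      ((p : ℝ) ^ (-((A.det.natAbs.factorization p / 2 : ℕ) : ℝ)) * (1 - 1 / (p : ℝ))) := by
  obtain ⟨x, hx, hxp⟩ := h
  obtain ⟨P, a, hP, hD⟩ := exists_transpose_mul_mul_eq_diagonal (isUnit_two_padicInt hodd)
    (hA.1.map (Int.cast : ℤ → ℤ_[p]))
  obtain ⟨y, rfl⟩ := Matrix.mulVec_surjective_iff_isUnit.2 hP x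
  have hsum : ∑ i, a i * y i ^ 2 = 2 * n := by rw [← hA.two_mul_qval_mulVec hD, hx]
  have hne : ∑ i, a i * y i ^ 2 ≠ 0 := by
    rw [hsum]
    exact mul_ne_zero two_ne_zero (Nat.cast_ne_zero.2 hn.ne')
  obtain ⟨ha, hval⟩ := ne_zero_and_sum_valuation_of_congruent_diagonal hdet hP hD
  obtain ⟨i₁, h₁⟩ := hprim.exists_isUnit hA hodd hP hD
  obtain ⟨i₀, hy⟩ := exists_isUnit_of_not_forall_dvd_mulVec hxp
  simpa only [DensityBound, hA.localCount_eq_solutionCount hodd hP hD, ← hsum, ← hval] using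
    exists_tendsto_and_rpow_le hodd ha h₁ hy hne

/-- Lemma 2, part 2 (odd primes): if `n` is primitively represented over `ℤ_p` then
`β_p(Q;n) ≥ p^(-⌊ord_p(D(Q))/2⌋) (1 - 1/p)`. -/
theorem local_density_primitive_odd
    (A : Matrix (Fin 4) (Fin 4) ℤ) (p n : ℕ) [Fact p.Prime]
    (hA : IsGram A) (hprim : IsPrimitiveQF A) (hpd : PosDefQF A)
    (hodd : p ≠ 2) (hn : 0 < n)
    (h : ∃ x : Fin 4 → ℤ_[p], Qval A x = (n : ℤ_[p]) ∧ ¬ ∀ i, (p : ℤ_[p]) ∣ x i) :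
    DensityBound A p n
      ((p : ℝ) ^ (-((A.det.natAbs.factorization p / 2 : ℕ) : ℝ)) * (1 - 1 / (p : ℝ))) :=
  local_density_primitive_odd_general A p n hA hprim hpd.det_ne_zero hodd hn h
end
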